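/- For any non-identity permutation w, let η = max(η(w), 0). Then for every m ≥ η, 𝔖_{1^m×w} = Σ_a c_a 𝔉_{0^{m−η}×a}, where c_a denotes the coefficient of 𝔉_a in the (unique) fundamental slide expansion of 𝔖_{1^η×w}. In particular, the Stanley symmetric function satisfies S_w(X) = Σ_a c_a F_{flat(a)}(X). Moreover, this is tight: if for some n and some m > n one has 𝔖_{1^m×w} = Σ_a [𝔉_a | 𝔖_{1^n×w}] 𝔉_{0^{m−n}×a}, then n ≥ η(w). -/

import Mathlib

open scoped Classical

namespace SlidePaper

/-- Sum of the first `i` entries of a weak composition of length `n`. -/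
def psum {n : ℕ} (a : Fin n → ℕ) (i : ℕ) : ℕ :=
  ∑ j ∈ Finset.univ.filter (fun j : Fin n => (j : ℕ) < i), a j

/-- `b` dominates `a`: all partial sums of `b` are at least those of `a`. -/
def Dominates {n : ℕ} (b a : Fin n → ℕ) : Prop :=
  ∀ i : Fin (n + 1), psum a i ≤ psum b i

/-- The flattening of a weak composition: the list of its nonzero entries in order. -/
def flat {n : ℕ} (a : Fin n → ℕ) : List ℕ :=
  (List.ofFn a).filter (fun x => x ≠ 0)

/-- `β` refines `α`: `β` splits into consecutive blocks with sums `α₁, α₂, …`. -/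
def Refines (β α : List ℕ) : Prop :=
  ∃ L : List (List ℕ), L.flatten = β ∧ L.map List.sum = α

/-- All weak compositions of length `n` with entries at most `k`. -/
def wcFinset (n k : ℕ) : Finset (Fin n → ℕ) :=
  Fintype.piFinset fun _ => Finset.range (k + 1)

/-- The monomial slide polynomial `𝔐_a`. -/
noncomputable def slideM {n : ℕ} (a : Fin n → ℕ) : MvPolynomial (Fin n) ℤ :=
  ∑ b ∈ (wcFinset n (∑ i, a i)).filter (fun b => Dominates b a ∧ flat b = flat a),
    MvPolynomial.monomial (Finsupp.equivFunOnFinite.symm b) 1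

/-- The fundamental slide polynomial `𝔉_a`. -/
noncomputable def slideF {n : ℕ} (a : Fin n → ℕ) : MvPolynomial (Fin n) ℤ :=
  ∑ b ∈ (wcFinset n (∑ i, a i)).filter (fun b => Dominates b a ∧ Refines (flat b) (flat a)),
    MvPolynomial.monomial (Finsupp.equivFunOnFinite.symm b) 1

/-- A weak composition is quasi-flat if its nonzero entries occupy consecutive positions. -/
def QuasiFlat {n : ℕ} (a : Fin n → ℕ) : Prop :=
  ∀ i j l : Fin n, i ≤ j → j ≤ l → a i ≠ 0 → a l ≠ 0 → a j ≠ 0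

/-- `b` strongly dominates `a`. -/
def StronglyDominates {n : ℕ} (b a : Fin n → ℕ) : Prop :=
  Dominates b a ∧ ∀ c : Fin n → ℕ, Dominates c a → flat c = flat b → Dominates c b

/-- The exponent vector placing the parts of `α` at the positions `i`. -/
noncomputable def placeExp {n : ℕ} (α : List ℕ) (i : Fin α.length → Fin n) : Fin n →₀ ℕ :=
  ∑ t : Fin α.length, Finsupp.single (i t) (α.get t)

/-- `f` is quasisymmetric in the variables `x_1, …, x_k` (0-indexed: `x_0, …, x_{k-1}`). -/
def IsQuasisymmetricIn {n : ℕ} (k : ℕ) (f : MvPolynomial (Fin n) ℤ) : Prop :=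
  ∀ α : List ℕ, (∀ x ∈ α, 0 < x) →
    ∀ i j : Fin α.length → Fin n, StrictMono i → StrictMono j →
      (∀ t, (i t : ℕ) < k) → (∀ t, (j t : ℕ) < k) →
      MvPolynomial.coeff (placeExp α i) f = MvPolynomial.coeff (placeExp α j) f

/-- The monomial quasisymmetric polynomial `M_α(x_1, …, x_k)` inside `ℤ[x_1, …, x_n]`. -/
noncomputable def Mqs (n k : ℕ) (α : List ℕ) : MvPolynomial (Fin n) ℤ :=
  ∑ i ∈ (Finset.univ : Finset (Fin α.length → Fin n)).filter
      (fun i : Fin α.length → Fin n => StrictMono i ∧ ∀ t, (i t : ℕ) < k),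
    ∏ t : Fin α.length, (MvPolynomial.X (i t) : MvPolynomial (Fin n) ℤ) ^ α.get t

/-- The fundamental quasisymmetric polynomial `F_α(x_1, …, x_k)` inside `ℤ[x_1, …, x_n]`. -/
noncomputable def Fqs (n k : ℕ) (α : List ℕ) : MvPolynomial (Fin n) ℤ :=
  ∑ c ∈ (Finset.univ : Finset (Composition α.sum)).filter
      (fun c => Refines c.blocks α ∧ c.blocks.length ≤ k),
    Mqs n k c.blocks

/-- Place the weak composition `a` (of length `N`) at offset `k` inside length `M`. -/
def shiftComp {N : ℕ} (k M : ℕ) (a : Fin N → ℕ) : Fin M → ℕ :=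
  fun i => if h : k ≤ (i : ℕ) ∧ (i : ℕ) - k < N then a ⟨(i : ℕ) - k, h.2⟩ else 0

/-- Spread the values `g` to positions `ι` inside a weak composition of length `n`. -/
def spread {l n : ℕ} (ι : Fin l → Fin n) (g : Fin l → ℕ) : Fin n → ℕ :=
  fun i => ∑ k, if ι k = i then g k else 0

/-- The monomial quasisymmetric function `M_α` in infinitely many variables. -/
noncomputable def MqsFun (α : List ℕ) : MvPowerSeries ℕ ℤ :=
  fun d => if ∃ i : Fin α.length → ℕ, StrictMono i ∧
      d = ∑ t : Fin α.length, Finsupp.single (i t) (α.get t) then 1 else 0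

/-- The fundamental quasisymmetric function `F_α` in infinitely many variables. -/
noncomputable def FqsFun (α : List ℕ) : MvPowerSeries ℕ ℤ :=
  ∑ c ∈ (Finset.univ : Finset (Composition α.sum)).filter (fun c => Refines c.blocks α),
    MqsFun c.blocks

/-- The cells of the Young diagram of `lam` (French notation): row `r` (from the
bottom, 0-indexed) has `lam.get r` cells. -/
abbrev Cells (lam : List ℕ) := Σ r : Fin lam.length, Fin (lam.get r)

/-- A filling of `lam` with entries in `{1, …, n}` (encoded as `Fin n`) is a semistandard
Young tableau: rows weakly increase left to right, columns strictly increase bottom to top. -/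
def IsSSYT {n : ℕ} {lam : List ℕ} (T : Cells lam → Fin n) : Prop :=
  (∀ (r : Fin lam.length) (c c' : Fin (lam.get r)), c ≤ c' → T ⟨r, c⟩ ≤ T ⟨r, c'⟩) ∧
  (∀ (r r' : Fin lam.length) (c' : Fin (lam.get r')) (h : (c' : ℕ) < lam.get r),
      (r : ℕ) < (r' : ℕ) → T ⟨r, ⟨c', h⟩⟩ < T ⟨r', c'⟩)

/-- The weight of a filling: the `v`-th entry counts the occurrences of the value `v`. -/
def wtT {n : ℕ} {lam : List ℕ} (T : Cells lam → Fin n) : Fin n → ℕ :=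
  fun v => (Finset.univ.filter (fun x : Cells lam => T x = v)).card

/-- A filling is quasi-Yamanouchi if for every value `v > 1`, the leftmost occurrence of `v`
lies weakly left of some occurrence of `v - 1`. -/
def IsQY {n : ℕ} {lam : List ℕ} (T : Cells lam → Fin n) : Prop :=
  ∀ (v : Fin n) (x : Cells lam), T x = v → 0 < (v : ℕ) →
    (∀ y : Cells lam, T y = v → (x.2 : ℕ) ≤ (y.2 : ℕ)) →
    ∃ z : Cells lam, (T z : ℕ) + 1 = (v : ℕ) ∧ (x.2 : ℕ) ≤ (z.2 : ℕ)

/-- The Schur polynomial `s_lam(x_1, …, x_n)` as the generating function of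
semistandard Young tableaux. -/
noncomputable def schurPoly (n : ℕ) (lam : List ℕ) : MvPolynomial (Fin n) ℤ :=
  ∑ T ∈ (Finset.univ : Finset (Cells lam → Fin n)).filter (fun T => IsSSYT T),
    MvPolynomial.monomial (Finsupp.equivFunOnFinite.symm (wtT T)) 1

/-- One destandardization step on fillings: for some value `v` occurring in `T` whose
leftmost occurrence is strictly right of every occurrence of `v - 1`, every `v` is
decremented to `v - 1`. -/
def TabStep {n : ℕ} {lam : List ℕ} (T T' : Cells lam → Fin n) : Prop :=
  ∃ v : Fin n, 0 < (v : ℕ) ∧ (∃ x, T x = v) ∧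
    (∀ x y : Cells lam, T x = v → (T y : ℕ) + 1 = (v : ℕ) → (y.2 : ℕ) < (x.2 : ℕ)) ∧
    ∀ x : Cells lam, (T' x : ℕ) = if T x = v then (v : ℕ) - 1 else (T x : ℕ)

/-- The reading word of a set of crosses: rows are read from top to bottom, each row from
left to right, the cross in (0-indexed) row `i` and column `j` recording the letter `i + j`
(representing the simple transposition swapping `i + j` and `i + j + 1` of `{0, 1, 2, …}`). -/
def readWord (P : Finset (ℕ × ℕ)) : List ℕ :=
  ((List.range (P.sup Prod.fst + 1)).reverse).flatMap
    (fun i => ((List.range (P.sup Prod.snd + 1)).filter (fun j => decide ((i, j) ∈ P))).map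
      (fun j => i + j))

/-- The permutation `s_{i_ℓ} ⋯ s_{i_1}` associated to the word `(i_1, …, i_ℓ)`,
where `s_k` swaps `k` and `k + 1`. -/
def wordPerm (l : List ℕ) : Equiv.Perm ℕ :=
  ((l.map (fun k => Equiv.swap k (k + 1))).reverse).prod

/-- A word is reduced if no shorter word has the same product. -/
def IsReducedWord (l : List ℕ) : Prop :=
  ∀ l' : List ℕ, wordPerm l' = wordPerm l → l.length ≤ l'.length

/-- `P` is a reduced pipe dream of shape `w`: the pipes trace out `w` and no two pipes
cross more than once, equivalently the reading word of `P` is a reduced word for `w`. -/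
def IsPD (w : Equiv.Perm ℕ) (P : Finset (ℕ × ℕ)) : Prop :=
  wordPerm (readWord P) = w ∧ IsReducedWord (readWord P)

/-- `P` is a quasi-Yamanouchi pipe dream of shape `w`: for every row, the westernmost cross
is in the first column or lies weakly west of some cross in the row above. -/
def IsQPD (w : Equiv.Perm ℕ) (P : Finset (ℕ × ℕ)) : Prop :=
  IsPD w P ∧ ∀ i j : ℕ, (i, j) ∈ P → (∀ j', (i, j') ∈ P → j ≤ j') →
    (j = 0 ∨ ∃ j', (i + 1, j') ∈ P ∧ j ≤ j')

/-- One destandardization step on pipe dreams: a row with no cross in the first column,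
all of whose crosses lie strictly east of every cross in the row above, has all its
crosses moved one step northwest. -/
def PDStep (P P' : Finset (ℕ × ℕ)) : Prop :=
  ∃ r : ℕ, (∃ j, (r, j) ∈ P) ∧ (r, 0) ∉ P ∧
    (∀ j j', (r, j) ∈ P → (r + 1, j') ∈ P → j' < j) ∧
    P' = P.filter (fun p => p.1 ≠ r) ∪
      (P.filter (fun p => p.1 = r)).image (fun p => (r + 1, p.2 - 1))

/-- The number of crosses of `P` in (0-indexed) row `i`. -/
def rowWt (P : Finset (ℕ × ℕ)) (i : ℕ) : ℕ := (P.filter (fun p => p.1 = i)).card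

/-- The weight of a pipe dream, as a weak composition of length `n`. -/
def wtFin (n : ℕ) (P : Finset (ℕ × ℕ)) : Fin n → ℕ := fun i => rowWt P (i : ℕ)

/-- The flattened weight of a pipe dream: the list of nonzero row counts, bottom row first. -/
def flatWt (P : Finset (ℕ × ℕ)) : List ℕ :=
  ((List.range (P.sup Prod.fst + 1)).map (rowWt P)).filter (fun x => x ≠ 0)

/-- The Schubert polynomial of `w` in the variables `x_1, …, x_n`, as the generating
function of reduced pipe dreams of shape `w`. -/
noncomputable def SchubertPoly (n : ℕ) (w : Equiv.Perm ℕ) : MvPolynomial (Fin n) ℤ :=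
  ∑ᶠ P ∈ {P : Finset (ℕ × ℕ) | IsPD w P},
    MvPolynomial.monomial (Finsupp.equivFunOnFinite.symm (wtFin n P)) 1

/-- The Lehmer code of `w` (0-indexed): `lehmer w i` counts `j > i` with `w j < w i`. -/
noncomputable def lehmer (w : Equiv.Perm ℕ) (i : ℕ) : ℕ :=
  Set.ncard {j : ℕ | i < j ∧ w j < w i}

/-- The Lehmer code of `w` as a weak composition of length `n`. -/
noncomputable def lehmerFin (n : ℕ) (w : Equiv.Perm ℕ) : Fin n → ℕ :=
  fun i => lehmer w (i : ℕ)

/-- The number of inversions of `w`. -/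
noncomputable def invCount (w : Equiv.Perm ℕ) : ℕ :=
  Set.ncard {p : ℕ × ℕ | p.1 < p.2 ∧ w p.2 < w p.1}

/-- The largest entry of the Lehmer code of `w`. -/
noncomputable def maxLehmer (w : Equiv.Perm ℕ) : ℕ :=
  sSup (Set.range (lehmer w))

/-- The (0-indexed) position of the first descent of `w`. -/
noncomputable def firstDescent (w : Equiv.Perm ℕ) : ℕ :=
  sInf {i : ℕ | w (i + 1) < w i}

/-- `δ(w) = 1` if every position attaining `max(L(w))` is at or before the first descent,
and `δ(w) = 0` otherwise. -/
noncomputable def delta (w : Equiv.Perm ℕ) : ℤ :=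
  if ∀ i : ℕ, lehmer w i = maxLehmer w → i ≤ firstDescent w then 1 else 0

/-- `η(w) = inv(w) − max(L(w)) + δ(w) − min{i : w_i > w_{i+1}}`. -/
noncomputable def eta (w : Equiv.Perm ℕ) : ℤ :=
  (invCount w : ℤ) - (maxLehmer w : ℤ) + delta w - ((firstDescent w : ℤ) + 1)

/-- The decomposition of a list into maximal strictly increasing runs. -/
def runsStrict : List ℕ → List (List ℕ)
  | [] => []
  | x :: rest =>
    match runsStrict rest, rest with
    | r :: rs, y :: _ => if x < y then (x :: r) :: rs else [x] :: r :: rs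
    | _, _ => [[x]]

/-- The descent composition of a word: lengths of its maximal increasing runs, a new run
beginning whenever a letter is followed by a weakly smaller letter. -/
def desStrict (l : List ℕ) : List ℕ := (runsStrict l).map List.length

/-- The decomposition of a list into maximal weakly increasing runs. -/
def runsWeak : List ℕ → List (List ℕ)
  | [] => []
  | x :: rest =>
    match runsWeak rest, rest with
    | r :: rs, y :: _ => if x ≤ y then (x :: r) :: rs else [x] :: r :: rs
    | _, _ => [[x]]

/-- The descent composition of a word: the lengths of its maximal weakly increasing runs. -/
def desComp (l : List ℕ) : List ℕ := (runsWeak l).map List.length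

/-- The permutation `1^m × w`, fixing `0, …, m-1` and acting by `w` shifted by `m` above. -/
def shiftPerm (m : ℕ) (w : Equiv.Perm ℕ) : Equiv.Perm ℕ where
  toFun i := if i < m then i else w (i - m) + m
  invFun i := if i < m then i else w.symm (i - m) + m
  left_inv i := by
    dsimp only
    by_cases h : i < m
    · simp [h]
    · have h2 : ¬ (w (i - m) + m < m) := by omega
      rw [if_neg h, if_neg h2, Nat.add_sub_cancel, Equiv.symm_apply_apply]
      omega
  right_inv i := by
    dsimp only
    by_cases h : i < m
    · simp [h]
    · have h2 : ¬ (w.symm (i - m) + m < m) := by omega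
      rw [if_neg h, if_neg h2, Nat.add_sub_cancel, Equiv.apply_symm_apply]
      omega

/-- The quasi-shuffle product of two (strong) compositions, as a multiset of compositions. -/
def qShuffle : List ℕ → List ℕ → Multiset (List ℕ)
  | [], β => {β}
  | α, [] => {α}
  | a :: α, b :: β =>
      ((qShuffle α (b :: β)).map (a :: ·)) + ((qShuffle (a :: α) β).map (b :: ·)) +
        ((qShuffle α β).map ((a + b) :: ·))
termination_by α β => α.length + β.length
decreasing_by all_goals (simp only [List.length_cons]; omega)

def shuffles : List ℕ → List ℕ → Multiset (List ℕ)
  | [], B => {B}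
  | A, [] => {A}
  | x :: A, y :: B =>
      ((shuffles A (y :: B)).map (x :: ·)) + ((shuffles (x :: A) B).map (y :: ·))
termination_by A B => A.length + B.length
decreasing_by all_goals (simp only [List.length_cons]; omega)

/-- The word `(2n-1)^{a_1} (2n-3)^{a_2} ⋯ 1^{a_n}` associated to a weak composition `a`. -/
def wordA {n : ℕ} (a : Fin n → ℕ) : List ℕ :=
  (List.ofFn (fun i : Fin n => List.replicate (a i) (2 * n - 2 * (i : ℕ) - 1))).flatten

/-- The word `(2n)^{b_1} (2n-2)^{b_2} ⋯ 2^{b_n}` associated to a weak composition `b`. -/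
def wordB {n : ℕ} (b : Fin n → ℕ) : List ℕ :=
  (List.ofFn (fun i : Fin n => List.replicate (b i) (2 * n - 2 * (i : ℕ)))).flatten

/-- A list (padded with trailing zeros) dominates a weak composition of length `n`. -/
def DominatesList {n : ℕ} (l : List ℕ) (a : Fin n → ℕ) : Prop :=
  ∀ i : Fin (n + 1), psum a (i : ℕ) ≤ ((l.take (i : ℕ)).sum)

/-- The number of letters of the `A`-word (the odd letters) in the `k`-th weakly
increasing run of `C`. -/
def runCountA (C : List ℕ) (k : Fin (runsWeak C).length) : ℕ :=
  (((runsWeak C).get k).filter (fun z => z % 2 = 1)).length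

/-- The number of letters of the `B`-word (the even letters) in the `k`-th weakly
increasing run of `C`. -/
def runCountB (C : List ℕ) (k : Fin (runsWeak C).length) : ℕ :=
  (((runsWeak C).get k).filter (fun z => z % 2 = 0)).length

/-- The length of the `k`-th weakly increasing run of `C`. -/
def runLen (C : List ℕ) (k : Fin (runsWeak C).length) : ℕ :=
  ((runsWeak C).get k).length

/-- `c = bump_{(a,b)}(C)`: the unique weak composition of length `n` obtained by inserting
zero parts into `Des(C)` so that the correspondingly placed `Des_A` and `Des_B` dominate
`a` and `b`, minimal in dominance order among all such insertions. -/
def IsBumpS {n : ℕ} (a b : Fin n → ℕ) (C : List ℕ) (c : Fin n → ℕ) : Prop :=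
  ∃ ι : Fin (runsWeak C).length → Fin n, StrictMono ι ∧
    c = spread ι (runLen C) ∧
    Dominates (spread ι (runCountA C)) a ∧ Dominates (spread ι (runCountB C)) b ∧
    ∀ ι' : Fin (runsWeak C).length → Fin n, StrictMono ι' →
      Dominates (spread ι' (runCountA C)) a → Dominates (spread ι' (runCountB C)) b →
      Dominates (spread ι' (runLen C)) c

/-- The multiplicity `[c ∣ a ⧢ b]` of `c` in the slide product of `a` and `b`: the number of
shuffles `C` of the words of `a` and `b` lying in the shuffle set `SS(a,b)` with
`bump_{(a,b)}(C) = c`. -/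
noncomputable def slideMult {n : ℕ} (a b c : Fin n → ℕ) : ℕ :=
  Multiset.card ((shuffles (wordA a) (wordB b)).filter
    (fun C => DominatesList ((runsWeak C).map
        (fun r => (r.filter (fun z => z % 2 = 1)).length)) a ∧
      DominatesList ((runsWeak C).map (fun r => (r.filter (fun z => z % 2 = 0)).length)) b ∧
      IsBumpS a b C c))

/-- Membership in the quasi-shuffle set `QSS(a,b)`: a pair `(γ_a, γ_b)` of weak compositions
of a common length at most `n` with `γ_a ≥ a`, `flat(γ_a) = flat(a)`, `γ_b ≥ b`,
`flat(γ_b) = flat(b)` (after padding with trailing zeros), and all entries of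
`γ_a + γ_b` positive. -/
def InQSS {n : ℕ} (a b : Fin n → ℕ) (x : (l : ℕ) × (Fin l → ℕ) × (Fin l → ℕ)) : Prop :=
  x.1 ≤ n ∧
  Dominates (shiftComp 0 n x.2.1) a ∧ flat x.2.1 = flat a ∧
  Dominates (shiftComp 0 n x.2.2) b ∧ flat x.2.2 = flat b ∧
  ∀ k : Fin x.1, 0 < x.2.1 k + x.2.2 k

/-- `c = bump_{(a,b)}(γ_a, γ_b)`: the unique weak composition `c` of length `n` with
`flat(c) = γ_a + γ_b` whose decomposition `c = c_a + c_b` satisfies `c_a ≥ a` and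
`c_b ≥ b`, minimal in dominance order among all such compositions. -/
def IsBumpQ {n : ℕ} (a b : Fin n → ℕ) (x : (l : ℕ) × (Fin l → ℕ) × (Fin l → ℕ))
    (c : Fin n → ℕ) : Prop :=
  ∃ ι : Fin x.1 → Fin n, StrictMono ι ∧
    c = spread ι (fun k => x.2.1 k + x.2.2 k) ∧
    Dominates (spread ι x.2.1) a ∧ Dominates (spread ι x.2.2) b ∧
    ∀ ι' : Fin x.1 → Fin n, StrictMono ι' →
      Dominates (spread ι' x.2.1) a → Dominates (spread ι' x.2.2) b →
      Dominates (spread ι' (fun k => x.2.1 k + x.2.2 k)) c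

/-- The multiplicity `[c ∣ a ⧻ b]` of `c` in the quasi-slide product of `a` and `b`: the
number of pairs in the quasi-shuffle set `QSS(a,b)` whose bump is `c`. -/
noncomputable def qsMult {n : ℕ} (a b c : Fin n → ℕ) : ℕ :=
  Nat.card {x : (l : ℕ) × (Fin l → ℕ) × (Fin l → ℕ) // InQSS a b x ∧ IsBumpQ a b x c}

/-- The Stanley symmetric function `S_w`. -/
noncomputable def StanleySym (w : Equiv.Perm ℕ) : MvPowerSeries ℕ ℤ :=
  ∑ᶠ l ∈ {l : List ℕ | wordPerm l = w ∧ IsReducedWord l}, FqsFun (desStrict l)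

/-!
Group the pipe dreams of `1^m × w` by their reading word. With `m` subtracted from letters and
rows, the pipe dreams with reading word `l` are the weakly decreasing sequences of rows `≥ -m`
compatible with `l`. Among the compatible sequences one is pointwise greatest, the others are cut
out by dominance and refinement, and so the word `l` contributes exactly one fundamental slide
polynomial to `𝔖_{1^m × w}` if the greatest sequence stays above `-m`, that is if
`m ≥ requiredShift l`, and nothing otherwise. Its index only gains leading zeros as `m` grows.

Stability from `n` on therefore means that no reduced word `l` of `w` has `requiredShift l > n`.
Following an entry of the Lehmer code while the word sorts `w` gives `requiredShift l ≤ max (η, 0)`,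
and a greedy word attains `η`. Since braid moves connect all reduced words and change
`requiredShift` by at most one, every value in between occurs as well, so that the expansion grows
at each step below `η`.

The indices obtained flatten to the reversed descent compositions of the reduced words. The Stanley
symmetric function is unaffected by this reversal, because the generating functions
`(1 + x u₀) (1 + x u₁) ⋯` over the nilCoxeter relations commute for different `x`.
-/

/-! ### Reduced words -/

/-- The simple transposition exchanging `p` and `p + 1`. -/
abbrev adjSwap (p : ℕ) : Equiv.Perm ℕ := Equiv.swap p (p + 1)

/-- `p` is a descent of `w`, with positions counted from `0`. -/
abbrev IsDescent (w : Equiv.Perm ℕ) (p : ℕ) : Prop := w (p + 1) < w p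

/-- `w` belongs to the symmetric group on `{0, …, N - 1}`. -/
def FixesFrom (w : Equiv.Perm ℕ) (N : ℕ) : Prop := ∀ i, N ≤ i → w i = i

/-- `w` is finitary: it moves only finitely many points. -/
def IsFinitary (w : Equiv.Perm ℕ) : Prop := ∃ N, FixesFrom w N

/-- `l` is a reduced word of `w`, in the recursive form suited to induction: each letter is a
descent of the permutation that its predecessors have left to be sorted. -/
def Sorts : List ℕ → Equiv.Perm ℕ → Prop
  | [], w => w = 1
  | p :: l, w => IsDescent w p ∧ Sorts l (w * adjSwap p)

theorem wordPerm_nil : wordPerm [] = 1 := rfl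

theorem wordPerm_cons (p : ℕ) (l : List ℕ) : wordPerm (p :: l) = wordPerm l * adjSwap p := by
  simp [wordPerm]

theorem adjSwap_apply (p i : ℕ) :
    adjSwap p i = if i = p then p + 1 else if i = p + 1 then p else i :=
  Equiv.swap_apply_def p (p + 1) i

theorem mul_adjSwap_cancel (w : Equiv.Perm ℕ) (p : ℕ) : w * adjSwap p * adjSwap p = w :=
  Equiv.mul_swap_mul_self p (p + 1) w

theorem not_isDescent_mul_adjSwap {w : Equiv.Perm ℕ} {p : ℕ} (hp : IsDescent w p) :
    ¬ IsDescent (w * adjSwap p) p := by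
  simpa [IsDescent] using hp.le

theorem isDescent_mul_adjSwap {w : Equiv.Perm ℕ} {p : ℕ} (hp : ¬ IsDescent w p) :
    IsDescent (w * adjSwap p) p := by
  simpa [IsDescent] using lt_of_le_of_ne (not_lt.mp hp) (w.injective.ne p.succ_ne_self.symm)

theorem eq_one_of_forall_not_isDescent {w : Equiv.Perm ℕ} (h : ∀ p, ¬ IsDescent w p) : w = 1 := by
  have hmono : StrictMono w := strictMono_nat_of_lt_succ fun p =>
    lt_of_le_of_ne (not_lt.mp (h p)) (w.injective.ne p.succ_ne_self.symm)
  exact Equiv.coe_fn_injective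
    ((hmono.range_inj strictMono_id).mp (by rw [w.surjective.range_eq, Set.range_id]))

theorem exists_isDescent {w : Equiv.Perm ℕ} (hw : w ≠ 1) : ∃ p, IsDescent w p := by
  by_contra! h
  exact hw (eq_one_of_forall_not_isDescent fun p => not_lt.mpr (h p))

namespace FixesFrom

variable {w : Equiv.Perm ℕ} {N : ℕ}

theorem apply_lt (hN : FixesFrom w N) {i : ℕ} (hi : i < N) : w i < N := by
  by_contra h
  exact h ((w.injective (hN (w i) (not_lt.mp h))).symm ▸ hi)

theorem lt_of_inversion (hN : FixesFrom w N) {i j : ℕ} (hij : i < j) (h : w j < w i) :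
    j < N := by
  by_contra! hj
  rw [hN j hj] at h
  rcases lt_or_ge i N with hi | hi
  · exact absurd (hN.apply_lt hi) (by omega)
  · rw [hN i hi] at h
    omega

theorem finite_inversions (hN : FixesFrom w N) :
    {x : ℕ × ℕ | x.1 < x.2 ∧ w x.2 < w x.1}.Finite := by
  refine ((Set.finite_Iio N).prod (Set.finite_Iio N)).subset fun x ⟨hlt, hinv⟩ => ?_
  have hx := hN.lt_of_inversion hlt hinv
  exact ⟨hlt.trans hx, hx⟩

theorem mul_adjSwap (hN : FixesFrom w N) {p : ℕ} (hp : p + 1 < N) :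
    FixesFrom (w * adjSwap p) N := by
  intro i hi
  rw [Equiv.Perm.mul_apply, adjSwap_apply, if_neg (by omega), if_neg (by omega), hN i hi]

theorem lt_of_mem_sorts (hN : FixesFrom w N) {l : List ℕ} (h : Sorts l w) :
    ∀ p ∈ l, p < N := by
  induction l generalizing w with
  | nil => simp
  | cons p l ih =>
    have hp := hN.lt_of_inversion p.lt_succ_self h.1
    exact List.forall_mem_cons.mpr ⟨by omega, ih (hN.mul_adjSwap hp) h.2⟩

end FixesFrom

theorem IsFinitary.mul_adjSwap {w : Equiv.Perm ℕ} (h : IsFinitary w) (p : ℕ) :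
    IsFinitary (w * adjSwap p) := by
  obtain ⟨N, hN⟩ := h
  have hN' : FixesFrom w (max N (p + 2)) := fun i hi => hN i (le_of_max_le_left hi)
  exact ⟨_, hN'.mul_adjSwap (by omega)⟩

theorem isFinitary_wordPerm (l : List ℕ) : IsFinitary (wordPerm l) := by
  induction l with
  | nil => exact ⟨0, fun _ _ => rfl⟩
  | cons p l ih => rw [wordPerm_cons]; exact ih.mul_adjSwap p

theorem invCount_one : invCount 1 = 0 := by
  rw [invCount, Set.ncard_eq_zero ((show FixesFrom 1 0 from fun _ _ => rfl).finite_inversions),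
    Set.eq_empty_iff_forall_notMem]
  exact fun x ⟨hlt, hinv⟩ => lt_asymm hlt hinv

theorem inversions_eq_insert {w : Equiv.Perm ℕ} {p : ℕ} (hp : IsDescent w p) :
    {x : ℕ × ℕ | x.1 < x.2 ∧ w x.2 < w x.1} =
      insert (p, p + 1) (Prod.map (adjSwap p) (adjSwap p) ''
        {x : ℕ × ℕ | x.1 < x.2 ∧ (w * adjSwap p) x.2 < (w * adjSwap p) x.1}) := by
  ext ⟨i, j⟩
  simp only [Set.mem_ofPred_eq, Set.mem_insert_iff, Prod.mk.injEq, Set.mem_image, Prod.exists,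
    Prod.map_apply, Equiv.Perm.mul_apply]
  constructor
  · rintro ⟨hlt, hinv⟩
    by_cases hij : i = p ∧ j = p + 1
    · exact Or.inl hij
    · refine Or.inr ⟨adjSwap p i, adjSwap p j, ⟨?_, by simpa using hinv⟩, by simp, by simp⟩
      simp only [adjSwap_apply]
      grind
  · rintro (⟨rfl, rfl⟩ | ⟨a, b, ⟨hlt, hinv⟩, rfl, rfl⟩)
    · exact ⟨Nat.lt_succ_self _, hp⟩
    · refine ⟨?_, hinv⟩
      have hab : ¬ (a = p ∧ b = p + 1) := by
        rintro ⟨rfl, rfl⟩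
        exact not_isDescent_mul_adjSwap hp hinv
      simp only [adjSwap_apply]
      grind

theorem IsFinitary.invCount_eq {w : Equiv.Perm ℕ} (h : IsFinitary w) {p : ℕ}
    (hp : IsDescent w p) : invCount w = invCount (w * adjSwap p) + 1 := by
  obtain ⟨N, hN⟩ := h.mul_adjSwap p
  rw [invCount, inversions_eq_insert hp,
    Set.ncard_insert_of_notMem ?_ (hN.finite_inversions.image _),
    Set.ncard_image_of_injective _
      ((adjSwap p).injective.prodMap (adjSwap p).injective), invCount]
  rintro ⟨⟨a, b⟩, ⟨hlt, -⟩, hab⟩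
  simp only [Prod.map_apply, Prod.mk.injEq, adjSwap_apply] at hab
  grind

theorem IsFinitary.exists_sorts {w : Equiv.Perm ℕ} (h : IsFinitary w) : ∃ l, Sorts l w := by
  induction hn : invCount w using Nat.strong_induction_on generalizing w with
  | _ n ih =>
    by_cases hw : w = 1
    · exact ⟨[], hw⟩
    · obtain ⟨p, hp⟩ := exists_isDescent hw
      obtain ⟨l, hl⟩ := ih _ (by rw [← hn, h.invCount_eq hp]; omega) (h.mul_adjSwap p) rfl
      exact ⟨p :: l, hp, hl⟩

theorem Sorts.wordPerm_eq {w : Equiv.Perm ℕ} {l : List ℕ} (h : Sorts l w) : wordPerm l = w := by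
  induction l generalizing w with
  | nil => exact h.symm
  | cons p l ih => rw [wordPerm_cons, ih h.2, mul_adjSwap_cancel]

theorem Sorts.isFinitary {w : Equiv.Perm ℕ} {l : List ℕ} (h : Sorts l w) : IsFinitary w :=
  h.wordPerm_eq ▸ isFinitary_wordPerm l

theorem Sorts.length_eq {w : Equiv.Perm ℕ} {l : List ℕ} (h : Sorts l w) :
    l.length = invCount w := by
  induction l generalizing w with
  | nil => rw [show w = 1 from h, invCount_one, List.length_nil]
  | cons p l ih => rw [h.isFinitary.invCount_eq h.1, ← ih h.2, List.length_cons]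

theorem invCount_wordPerm_le (l : List ℕ) : invCount (wordPerm l) ≤ l.length := by
  induction l with
  | nil => exact invCount_one.le
  | cons p l ih =>
    rw [wordPerm_cons, List.length_cons]
    by_cases hp : IsDescent (wordPerm l) p
    · have := (isFinitary_wordPerm l).invCount_eq hp
      omega
    · have := ((isFinitary_wordPerm l).mul_adjSwap p).invCount_eq (isDescent_mul_adjSwap hp)
      rw [mul_adjSwap_cancel] at this
      omega

theorem sorts_of_length_le {l : List ℕ} (h : l.length ≤ invCount (wordPerm l)) :
    Sorts l (wordPerm l) := by
  induction l with
  | nil => exact wordPerm_nil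
  | cons p l ih =>
    rw [List.length_cons, wordPerm_cons] at h
    have hle := invCount_wordPerm_le l
    have hp : ¬ IsDescent (wordPerm l) p := fun hp => by
      have := (isFinitary_wordPerm l).invCount_eq hp
      omega
    have hp' := isDescent_mul_adjSwap hp
    have hcount := ((isFinitary_wordPerm l).mul_adjSwap p).invCount_eq hp'
    rw [mul_adjSwap_cancel] at hcount
    rw [wordPerm_cons]
    exact ⟨hp', (mul_adjSwap_cancel (wordPerm l) p).symm ▸ ih (by omega)⟩

theorem sorts_iff {w : Equiv.Perm ℕ} {l : List ℕ} :
    Sorts l w ↔ wordPerm l = w ∧ IsReducedWord l := by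
  constructor
  · refine fun h => ⟨h.wordPerm_eq, fun l' hl' => ?_⟩
    rw [h.length_eq, ← h.wordPerm_eq, ← hl']
    exact invCount_wordPerm_le l'
  · rintro ⟨rfl, h⟩
    obtain ⟨l', hl'⟩ := (isFinitary_wordPerm l).exists_sorts
    exact sorts_of_length_le (hl'.length_eq ▸ h l' hl'.wordPerm_eq)

theorem finite_sorts (w : Equiv.Perm ℕ) : {l | Sorts l w}.Finite := by
  rcases Set.eq_empty_or_nonempty {l | Sorts l w} with h | ⟨l₀, hl₀⟩
  · exact h ▸ Set.finite_empty
  · obtain ⟨N, hN⟩ := Sorts.isFinitary hl₀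
    refine ((List.finite_length_eq (Fin N) (invCount w)).image (List.map Fin.val)).subset ?_
    intro l hl
    exact ⟨l.pmap Fin.mk (hN.lt_of_mem_sorts hl), by simp [Sorts.length_eq hl],
      by simp [List.map_pmap]⟩

/-- The finite set of reduced words of `w`; it is empty unless `w` is finitary. -/
noncomputable def redWords (w : Equiv.Perm ℕ) : Finset (List ℕ) := (finite_sorts w).toFinset

theorem mem_redWords {w : Equiv.Perm ℕ} {l : List ℕ} : l ∈ redWords w ↔ Sorts l w := by
  simp [redWords]

theorem shiftPerm_apply (m : ℕ) (w : Equiv.Perm ℕ) (i : ℕ) :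
    shiftPerm m w i = if i < m then i else w (i - m) + m := rfl

theorem shiftPerm_mul_adjSwap (m : ℕ) (w : Equiv.Perm ℕ) (p : ℕ) :
    shiftPerm m w * adjSwap (p + m) = shiftPerm m (w * adjSwap p) := by
  ext i
  simp only [shiftPerm_apply, Equiv.Perm.mul_apply, adjSwap_apply]
  grind

theorem shiftPerm_eq_one {m : ℕ} {w : Equiv.Perm ℕ} : shiftPerm m w = 1 ↔ w = 1 := by
  refine ⟨fun h => Equiv.ext fun i => ?_, fun h => Equiv.ext fun i => ?_⟩
  · simpa [shiftPerm_apply] using DFunLike.congr_fun h (i + m)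
  · simp only [h, shiftPerm_apply, Equiv.Perm.one_apply]
    split_ifs <;> omega

theorem isDescent_shiftPerm_add {m : ℕ} {w : Equiv.Perm ℕ} {p : ℕ} :
    IsDescent (shiftPerm m w) (p + m) ↔ IsDescent w p := by
  simp [IsDescent, shiftPerm_apply, show p + m + 1 - m = p + 1 by omega,
    show ¬ p + m + 1 < m by omega]

theorem le_of_isDescent_shiftPerm {m : ℕ} {w : Equiv.Perm ℕ} {p : ℕ}
    (h : IsDescent (shiftPerm m w) p) : m ≤ p := by
  simp only [IsDescent, shiftPerm_apply] at h
  grind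

theorem sorts_map_add_iff {m : ℕ} {w : Equiv.Perm ℕ} {l : List ℕ} :
    Sorts (l.map (· + m)) (shiftPerm m w) ↔ Sorts l w := by
  induction l generalizing w with
  | nil => exact shiftPerm_eq_one
  | cons p l ih =>
    simp only [List.map_cons, Sorts, isDescent_shiftPerm_add, shiftPerm_mul_adjSwap, ih]

theorem Sorts.exists_eq_map_add {m : ℕ} {w : Equiv.Perm ℕ} {l : List ℕ}
    (h : Sorts l (shiftPerm m w)) : ∃ l' : List ℕ, l = l'.map (· + m) := by
  induction l generalizing w with
  | nil => exact ⟨[], rfl⟩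
  | cons p l ih =>
    obtain ⟨q, rfl⟩ := Nat.exists_eq_add_of_le' (le_of_isDescent_shiftPerm h.1)
    obtain ⟨l', rfl⟩ := ih (shiftPerm_mul_adjSwap m w q ▸ h.2)
    exact ⟨q :: l', rfl⟩

/-! ### The Lehmer code -/

theorem finite_lehmer (w : Equiv.Perm ℕ) (i : ℕ) : {j | i < j ∧ w j < w i}.Finite :=
  ((Set.finite_Iio (w i)).preimage w.injective.injOn).subset fun _ hj => hj.2

theorem lehmer_one (i : ℕ) : lehmer 1 i = 0 := by
  rw [lehmer, Set.ncard_eq_zero (finite_lehmer 1 i), Set.eq_empty_iff_forall_notMem]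
  exact fun j ⟨hij, hji⟩ => lt_asymm hij hji

theorem FixesFrom.lehmer_eq_zero {w : Equiv.Perm ℕ} {N : ℕ} (hN : FixesFrom w N) {i : ℕ}
    (hi : N ≤ i) : lehmer w i = 0 := by
  rw [lehmer, Set.ncard_eq_zero (finite_lehmer w i), Set.eq_empty_iff_forall_notMem]
  rintro j ⟨hij, hji⟩
  have := hN.lt_of_inversion hij hji
  omega

theorem lehmer_eq {w : Equiv.Perm ℕ} {p : ℕ} (hp : IsDescent w p) (i : ℕ) :
    lehmer w i = lehmer (w * adjSwap p) (adjSwap p i) + if i = p then 1 else 0 := by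
  set S := {k | adjSwap p i < k ∧ (w * adjSwap p) k < (w * adjSwap p) (adjSwap p i)} with hS
  have himage : ∀ j, j ∈ adjSwap p '' S ↔ adjSwap p i < adjSwap p j ∧ w j < w i := by
    intro j
    rw [Equiv.image_eq_preimage_symm]
    simp [hS]
  rw [lehmer, lehmer, ← hS, ← Set.ncard_image_of_injective S (adjSwap p).injective]
  split_ifs with hi
  · subst hi
    rw [← Set.ncard_insert_of_notMem (a := i + 1) (by simp)
      ((finite_lehmer _ _).image _)]
    congr 1
    ext j
    rw [Set.mem_insert_iff, himage, Set.mem_ofPred_eq]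
    simp only [adjSwap_apply]
    grind
  · rw [add_zero]
    congr 1
    ext j
    rw [himage, Set.mem_ofPred_eq]
    simp only [adjSwap_apply]
    grind

theorem lehmer_pos_of_isDescent {w : Equiv.Perm ℕ} {p : ℕ} (hp : IsDescent w p) :
    0 < lehmer w p := by
  simp [lehmer_eq hp]

theorem isDescent_of_lehmer_lt {w : Equiv.Perm ℕ} {p : ℕ} (h : lehmer w (p + 1) < lehmer w p) :
    IsDescent w p := by
  by_contra hp
  refine h.not_ge (Set.ncard_le_ncard ?_ (finite_lehmer w (p + 1)))
  rintro j ⟨hpj, hj⟩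
  have hjp : j ≠ p + 1 := by
    rintro rfl
    exact hp hj
  exact ⟨by omega, hj.trans_le (not_lt.mp hp)⟩

theorem IsFinitary.exists_last_lehmer_gt {w : Equiv.Perm ℕ} (h : IsFinitary w) {k : ℕ}
    (hk : ∃ i, k < lehmer w i) :
    ∃ r, IsDescent w r ∧ k < lehmer w r ∧ ∀ i, r < i → lehmer w i ≤ k := by
  obtain ⟨N, hN⟩ := h
  have hfin : {i | k < lehmer w i}.Finite := (Set.finite_Iio N).subset fun i hi => by
    by_contra! hNi
    simp [hN.lehmer_eq_zero (not_lt.mp hNi)] at hi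
  obtain ⟨r, hr, hmax⟩ := Set.exists_max_image _ id hfin hk
  have hlast : ∀ i, r < i → lehmer w i ≤ k := fun i hi =>
    not_lt.mp fun hki => (hmax i hki).not_gt hi
  exact ⟨r, isDescent_of_lehmer_lt ((hlast (r + 1) r.lt_succ_self).trans_lt hr), hr, hlast⟩

theorem IsFinitary.exists_isDescent_lehmer_eq_zero {w : Equiv.Perm ℕ} (h : IsFinitary w)
    (hw : w ≠ 1) : ∃ r, IsDescent w r ∧ ∀ i, r < i → lehmer w i = 0 := by
  obtain ⟨p, hp⟩ := exists_isDescent hw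
  obtain ⟨r, hr, -, hlast⟩ := h.exists_last_lehmer_gt ⟨p, lehmer_pos_of_isDescent hp⟩
  exact ⟨r, hr, fun i hi => Nat.le_zero.mp (hlast i hi)⟩

theorem IsFinitary.bddAbove_lehmer {w : Equiv.Perm ℕ} (h : IsFinitary w) :
    BddAbove (Set.range (lehmer w)) := by
  obtain ⟨N, hN⟩ := h
  refine (((Set.finite_Iio N).image (lehmer w)).insert 0).bddAbove.mono ?_
  rintro _ ⟨i, rfl⟩
  rcases lt_or_ge i N with hi | hi
  · exact Set.mem_insert_of_mem _ ⟨i, hi, rfl⟩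
  · exact Set.mem_insert_iff.mpr (Or.inl (hN.lehmer_eq_zero hi))

theorem IsFinitary.lehmer_le_maxLehmer {w : Equiv.Perm ℕ} (h : IsFinitary w) (i : ℕ) :
    lehmer w i ≤ maxLehmer w :=
  le_csSup h.bddAbove_lehmer ⟨i, rfl⟩

theorem IsFinitary.exists_lehmer_eq_maxLehmer {w : Equiv.Perm ℕ} (h : IsFinitary w) :
    ∃ i, lehmer w i = maxLehmer w :=
  Nat.sSup_mem (Set.range_nonempty _) h.bddAbove_lehmer

theorem isDescent_firstDescent {w : Equiv.Perm ℕ} (hw : w ≠ 1) :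
    IsDescent w (firstDescent w) :=
  Nat.sInf_mem (s := {i | w (i + 1) < w i}) (exists_isDescent hw)

theorem not_isDescent_of_lt_firstDescent {w : Equiv.Perm ℕ} {k : ℕ} (hk : k < firstDescent w) :
    ¬ IsDescent w k :=
  Nat.notMem_of_lt_sInf (s := {i | w (i + 1) < w i}) hk

/-! ### The shift required by a reduced word -/

/-- The number of weak descents of the word `p :: l`. -/
def desFrom : ℕ → List ℕ → ℕ
  | _, [] => 0
  | p, q :: l => (if q ≤ p then 1 else 0) + desFrom q l

/-- The number of strict ascents of the word `p :: l`. -/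
def ascFrom : ℕ → List ℕ → ℕ
  | _, [] => 0
  | p, q :: l => (if p < q then 1 else 0) + ascFrom q l

/-- The least `m` such that the word, with `m` added to every letter, is the reading word of
some pipe dream: reading row by row, the rows decrease weakly, and strictly at each weak descent
of the word, while a letter is never smaller than the index of its row. -/
def requiredShift : List ℕ → ℕ
  | [] => 0
  | p :: l => max (desFrom p l - p) (requiredShift l)

theorem desFrom_add_ascFrom (p : ℕ) (l : List ℕ) : desFrom p l + ascFrom p l = l.length := by
  induction l generalizing p with
  | nil => rfl
  | cons q l ih =>
    have := ih q
    simp only [desFrom, ascFrom, List.length_cons]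
    split_ifs <;> omega

theorem lehmer_le_ascFrom {w : Equiv.Perm ℕ} {p : ℕ} {l : List ℕ} (h : Sorts (p :: l) w) (i : ℕ) :
    lehmer w i ≤ ascFrom p l + if i ≤ p then 1 else 0 := by
  induction l generalizing w p i with
  | nil =>
    rw [lehmer_eq h.1, show w * adjSwap p = 1 from h.2, lehmer_one]
    split_ifs <;> omega
  | cons q l ih =>
    have hpq : p ≠ q := by
      rintro rfl
      exact not_isDescent_mul_adjSwap h.1 h.2.1
    have hle := ih h.2 (adjSwap p i)
    rw [lehmer_eq h.1, ascFrom]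
    rw [adjSwap_apply] at hle ⊢
    split_ifs at hle ⊢ <;> omega

-- Sorting by a letter shortens the word by one, and lowers the Lehmer entry at `i` only when it
-- moves `i` up; following `i` and the least descent `d` along preserves the bound `hn`.
theorem requiredShift_le {w : Equiv.Perm ℕ} {l : List ℕ} (h : Sorts l w) {d i n : ℕ}
    (hd : ∀ k, IsDescent w k → d ≤ k)
    (hn : l.length + (if i ≤ d then 1 else 0) ≤ lehmer w i + d + n + 1) :
    requiredShift l ≤ n := by
  induction l generalizing w d i with
  | nil => exact Nat.zero_le n
  | cons p l ih =>
    have hdp := hd p h.1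
    rw [List.length_cons] at hn
    refine max_le ?_ (ih h.2 (d := if d < p then d else d - 1) (i := adjSwap p i) ?_ ?_)
    · have hle := lehmer_le_ascFrom h i
      have hadd := desFrom_add_ascFrom p l
      split_ifs at hle hn <;> omega
    · intro k hk
      by_contra! hlt
      refine (hd k ?_).not_gt (by split_ifs at hlt <;> omega)
      simp only [IsDescent, Equiv.Perm.mul_apply, adjSwap_apply] at hk
      split_ifs at hk hlt <;> omega
    · rw [lehmer_eq h.1] at hn
      rw [adjSwap_apply] at hn ⊢
      split_ifs at hn ⊢ <;> omega

theorem requiredShift_le_of_eta_le {w : Equiv.Perm ℕ} {l : List ℕ} (h : Sorts l w) {n : ℕ}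
    (hn : eta w ≤ n) : requiredShift l ≤ n := by
  have hd : ∀ k, IsDescent w k → firstDescent w ≤ k := fun k hk =>
    not_lt.mp fun hlt => not_isDescent_of_lt_firstDescent hlt hk
  rw [eta, ← h.length_eq, delta] at hn
  split_ifs at hn with hδ
  · obtain ⟨i, hi⟩ := h.isFinitary.exists_lehmer_eq_maxLehmer
    exact requiredShift_le h hd (i := i) (by rw [if_pos (hδ i hi), hi]; omega)
  · push Not at hδ
    obtain ⟨i, hi, hlt⟩ := hδ
    exact requiredShift_le h hd (i := i) (by rw [if_neg hlt.not_ge, hi]; omega)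

-- Greedily take as next letter the last position whose Lehmer entry exceeds the remaining budget
-- `K` of ascents, which spends none of it, or else the last position with a nonzero entry.
theorem IsFinitary.exists_sorts_ascFrom_le {w : Equiv.Perm ℕ} (h : IsFinitary w) {p K : ℕ}
    (hp : IsDescent w p) (hK : ∀ i, lehmer w i ≤ K + if i ≤ p then 1 else 0) :
    ∃ l, Sorts (p :: l) w ∧ ascFrom p l ≤ K := by
  induction hn : invCount w using Nat.strong_induction_on generalizing w p K with
  | _ n ih =>
    have hcount := h.invCount_eq hp
    have h' := h.mul_adjSwap p
    have hK' : ∀ i, lehmer (w * adjSwap p) i ≤ K + if i < p then 1 else 0 := by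
      intro i
      have hle := hK (adjSwap p i)
      rw [lehmer_eq hp, Equiv.swap_apply_self] at hle
      rw [adjSwap_apply] at hle
      split_ifs at hle ⊢ <;> omega
    by_cases hex : ∃ i, K < lehmer (w * adjSwap p) i
    · obtain ⟨r, hr, hrK, hlast⟩ := h'.exists_last_lehmer_gt hex
      have hrp : r < p := by
        by_contra hrp
        simpa [hrp, hrK.not_ge] using hK' r
      obtain ⟨l, hl, hasc⟩ := ih _ (by omega) h' hr (K := K) (fun i => by
        have hle := hK' i
        have := hlast i
        split_ifs at hle ⊢ <;> omega) rfl
      exact ⟨r :: l, ⟨hp, hl⟩, by rw [ascFrom, if_neg hrp.not_gt]; omega⟩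
    · push Not at hex
      by_cases hw' : w * adjSwap p = 1
      · exact ⟨[], ⟨hp, hw'⟩, Nat.zero_le K⟩
      · obtain ⟨r, hr, hlast⟩ := h'.exists_isDescent_lehmer_eq_zero hw'
        have hpos := lehmer_pos_of_isDescent hr
        have hrK := hex r
        obtain ⟨l, hl, hasc⟩ := ih _ (by omega) h' hr (K := K - 1) (fun i => by
          have := hex i
          have := hlast i
          split_ifs <;> omega) rfl
        exact ⟨r :: l, ⟨hp, hl⟩, by rw [ascFrom]; split_ifs <;> omega⟩

theorem IsFinitary.exists_sorts_eta_le {w : Equiv.Perm ℕ} (h : IsFinitary w) (hw : w ≠ 1) :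
    ∃ l, Sorts l w ∧ eta w ≤ requiredShift l := by
  set p := firstDescent w
  have hdesc : IsDescent w p := isDescent_firstDescent hw
  obtain ⟨K, hK, hKδ⟩ : ∃ K : ℕ, (∀ i, lehmer w i ≤ K + if i ≤ p then 1 else 0) ∧
      (K : ℤ) = maxLehmer w - delta w := by
    by_cases hδ : ∀ i, lehmer w i = maxLehmer w → i ≤ p
    · have hpos := (lehmer_pos_of_isDescent hdesc).trans_le (h.lehmer_le_maxLehmer p)
      refine ⟨maxLehmer w - 1, fun i => ?_, by rw [delta, if_pos hδ]; omega⟩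
      have hle := h.lehmer_le_maxLehmer i
      have := hδ i
      split_ifs <;> omega
    · exact ⟨maxLehmer w, fun i => (h.lehmer_le_maxLehmer i).trans (Nat.le_add_right _ _),
        by rw [delta, if_neg hδ, sub_zero]⟩
  obtain ⟨l, hl, hasc⟩ := h.exists_sorts_ascFrom_le hdesc hK
  have hlen := hl.length_eq
  have hadd := desFrom_add_ascFrom p l
  have hle : desFrom p l - p ≤ requiredShift (p :: l) := le_max_left _ _
  rw [List.length_cons] at hlen
  exact ⟨p :: l, hl, by rw [eta]; omega⟩

-- The word built here is the reading word of the bottom pipe dream, whose `i`-th row consists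
-- of the first `lehmer w i` columns.
theorem IsFinitary.exists_sorts_requiredShift_cons_eq_zero {w : Equiv.Perm ℕ} (h : IsFinitary w)
    {j k : ℕ} (hj : IsDescent w j) (hkj : k ≤ j) (hsupp : ∀ i, k ≤ i → i ≠ j → lehmer w i = 0) :
    ∃ l, Sorts (j :: l) w ∧ desFrom j l ≤ k ∧ requiredShift (j :: l) = 0 := by
  induction hn : invCount w using Nat.strong_induction_on generalizing w j k with
  | _ n ih =>
    have hcount := h.invCount_eq hj
    have h' := h.mul_adjSwap j
    have hsupp' : ∀ i, k ≤ i → i ≠ j + 1 → lehmer (w * adjSwap j) i = 0 := by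
      intro i hki hij
      have hzero := hsupp (adjSwap j i)
      rw [lehmer_eq hj, Equiv.swap_apply_self] at hzero
      rw [adjSwap_apply] at hzero
      split_ifs at hzero <;> omega
    by_cases hlast : lehmer (w * adjSwap j) (j + 1) = 0
    · by_cases hw' : w * adjSwap j = 1
      · exact ⟨[], ⟨hj, hw'⟩, Nat.zero_le k, by simp [requiredShift, desFrom]⟩
      · obtain ⟨r, hr, hr0⟩ := h'.exists_isDescent_lehmer_eq_zero hw'
        have hpos := lehmer_pos_of_isDescent hr
        have hrk : r < k := by
          by_contra! hkr
          by_cases hrj : r = j + 1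
          · rw [hrj] at hpos
            omega
          · rw [hsupp' r hkr hrj] at hpos
            omega
        obtain ⟨l, hl, hdes, hshift⟩ :=
          ih _ (by omega) h' hr le_rfl (fun i hri hir => hr0 i (by omega)) rfl
        refine ⟨r :: l, ⟨hj, hl⟩, ?_, ?_⟩ <;> simp only [requiredShift, desFrom] at * <;>
          split_ifs <;> omega
    · have hdesc : IsDescent (w * adjSwap j) (j + 1) := isDescent_of_lehmer_lt (by
        rw [hsupp' (j + 2) (by omega) (by omega)]
        omega)
      obtain ⟨l, hl, hdes, hshift⟩ := ih _ (by omega) h' hdesc (by omega) hsupp' rfl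
      refine ⟨(j + 1) :: l, ⟨hj, hl⟩, ?_, ?_⟩ <;> simp only [requiredShift, desFrom] at * <;>
        split_ifs <;> omega

theorem IsFinitary.exists_sorts_requiredShift_eq_zero {w : Equiv.Perm ℕ} (h : IsFinitary w) :
    ∃ l, Sorts l w ∧ requiredShift l = 0 := by
  by_cases hw : w = 1
  · exact ⟨[], hw, rfl⟩
  · obtain ⟨r, hr, hlast⟩ := h.exists_isDescent_lehmer_eq_zero hw
    obtain ⟨l, hl, -, hshift⟩ := h.exists_sorts_requiredShift_cons_eq_zero hr le_rfl
      fun i hri hir => hlast i (by omega)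
    exact ⟨r :: l, hl, hshift⟩

/-! ### Braid moves -/

/-- One commutation or braid move on words; reversed moves are supplied by
`Relation.EqvGen`. -/
inductive BraidMove : List ℕ → List ℕ → Prop
  | comm {p q : ℕ} (l : List ℕ) (h : p + 1 < q) : BraidMove (p :: q :: l) (q :: p :: l)
  | braid (p : ℕ) (l : List ℕ) :
      BraidMove (p :: (p + 1) :: p :: l) ((p + 1) :: p :: (p + 1) :: l)
  | cons (p : ℕ) {l l' : List ℕ} (h : BraidMove l l') : BraidMove (p :: l) (p :: l')

theorem adjSwap_mul_comm {p q : ℕ} (h : p + 1 < q) :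
    adjSwap q * adjSwap p = adjSwap p * adjSwap q := by
  ext i
  simp only [Equiv.Perm.mul_apply, adjSwap_apply]
  grind

theorem adjSwap_mul_mul (p : ℕ) :
    adjSwap p * (adjSwap (p + 1) * adjSwap p) =
      adjSwap (p + 1) * (adjSwap p * adjSwap (p + 1)) := by
  ext i
  simp only [Equiv.Perm.mul_apply, adjSwap_apply]
  grind

theorem BraidMove.wordPerm_eq {a b : List ℕ} (h : BraidMove a b) : wordPerm a = wordPerm b := by
  induction h with
  | comm l h => simp only [wordPerm_cons, mul_assoc, adjSwap_mul_comm h]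
  | braid p l => simp only [wordPerm_cons, mul_assoc, adjSwap_mul_mul]
  | cons p h ih => rw [wordPerm_cons, wordPerm_cons, ih]

theorem BraidMove.length_eq {a b : List ℕ} (h : BraidMove a b) : a.length = b.length := by
  induction h with
  | comm | braid => rfl
  | cons p _ ih => simp [ih]

theorem Sorts.of_eqvGen {w : Equiv.Perm ℕ} {a b : List ℕ} (ha : Sorts a w)
    (h : Relation.EqvGen BraidMove a b) : Sorts b w := by
  have hab : wordPerm a = wordPerm b ∧ a.length = b.length := by
    clear ha
    induction h with
    | rel a b h => exact ⟨h.wordPerm_eq, h.length_eq⟩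
    | refl a => exact ⟨rfl, rfl⟩
    | symm a b _ ih => exact ⟨ih.1.symm, ih.2.symm⟩
    | trans a b c _ _ ihab ihbc => exact ⟨ihab.1.trans ihbc.1, ihab.2.trans ihbc.2⟩
  rw [sorts_iff, IsReducedWord, ← hab.1, ← hab.2]
  exact sorts_iff.mp ha

theorem IsFinitary.exists_braidMove {w : Equiv.Perm ℕ} (h : IsFinitary w) {p q : ℕ}
    (hp : IsDescent w p) (hq : IsDescent w q) (hpq : p < q) :
    ∃ a b, Sorts (p :: a) w ∧ BraidMove (p :: a) (q :: b) := by
  rcases (Nat.succ_le_of_lt hpq).lt_or_eq with hlt | rfl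
  · obtain ⟨c, hc⟩ := ((h.mul_adjSwap p).mul_adjSwap q).exists_sorts
    refine ⟨q :: c, p :: c, ⟨hp, ?_, hc⟩, .comm c hlt⟩
    simpa only [IsDescent, Equiv.Perm.mul_apply, adjSwap_apply, if_neg hpq.ne',
      if_neg hlt.ne', if_neg (show q + 1 ≠ p by omega), if_neg (show q + 1 ≠ p + 1 by omega)]
      using hq
  · obtain ⟨c, hc⟩ :=
      (((h.mul_adjSwap p).mul_adjSwap (p + 1)).mul_adjSwap p).exists_sorts
    refine ⟨(p + 1) :: p :: c, p :: (p + 1) :: c, ⟨hp, ?_, ?_, hc⟩, .braid p c⟩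
    · simpa [IsDescent, adjSwap_apply, show p + 1 + 1 ≠ p by omega] using hq.trans hp
    · simpa [IsDescent, adjSwap_apply, show p ≠ p + 1 + 1 by omega,
        show p + 1 + 1 ≠ p by omega] using hq

theorem eqvGen_cons (p : ℕ) {a b : List ℕ} (h : Relation.EqvGen BraidMove a b) :
    Relation.EqvGen BraidMove (p :: a) (p :: b) := by
  induction h with
  | rel a b h => exact .rel _ _ (.cons p h)
  | refl a => exact .refl _
  | symm a b _ ih => exact ih.symm
  | trans a b c _ _ ihab ihbc => exact ihab.trans _ _ _ ihbc

/-- Matsumoto's theorem. -/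
theorem Sorts.eqvGen_braidMove {w : Equiv.Perm ℕ} {a b : List ℕ} (ha : Sorts a w)
    (hb : Sorts b w) : Relation.EqvGen BraidMove a b := by
  have hlen : a.length = b.length := ha.length_eq.trans hb.length_eq.symm
  induction hn : a.length generalizing w a b with
  | zero =>
    rw [List.length_eq_zero_iff.mp hn, List.length_eq_zero_iff.mp (hlen.symm.trans hn)]
    exact .refl _
  | succ n ih =>
    obtain ⟨p, a, rfl⟩ := List.exists_cons_of_length_eq_add_one hn
    obtain ⟨q, b, rfl⟩ := List.exists_cons_of_length_eq_add_one (hlen.symm.trans hn)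
    wlog hpq : p ≤ q generalizing p q a b
    · exact (this q b hb (hlen.symm.trans hn) p a ha hlen.symm (le_of_not_ge hpq)).symm
    have ih_cons : ∀ {r : ℕ} {c d : List ℕ}, Sorts (r :: c) w → Sorts (r :: d) w →
        Relation.EqvGen BraidMove (r :: c) (r :: d) := fun {r c d} hc hd => by
      have hcl := hc.length_eq.trans ha.length_eq.symm
      have hdl := hd.length_eq.trans ha.length_eq.symm
      simp only [List.length_cons] at hcl hdl hn
      exact eqvGen_cons r (ih hc.2 hd.2 (by omega) (by omega))
    rcases hpq.eq_or_lt with rfl | hlt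
    · exact ih_cons ha hb
    · obtain ⟨a', b', ha', hmove⟩ := ha.isFinitary.exists_braidMove ha.1 hb.1 hlt
      have hmove : Relation.EqvGen BraidMove (p :: a') (q :: b') := .rel _ _ hmove
      exact (ih_cons ha ha').trans _ _ _ (hmove.trans _ _ _ (ih_cons (ha'.of_eqvGen hmove) hb))

theorem desFrom_mono {p q : ℕ} (h : p ≤ q) (l : List ℕ) : desFrom p l ≤ desFrom q l := by
  cases l <;> simp only [desFrom] <;> grind

theorem desFrom_le_add_one (p q : ℕ) (l : List ℕ) : desFrom q l ≤ desFrom p l + 1 := by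
  cases l <;> simp only [desFrom] <;> grind

theorem BraidMove.desFrom_le {a b : List ℕ} (h : BraidMove a b) (x : ℕ) :
    desFrom x a ≤ desFrom x b + 1 ∧ desFrom x b ≤ desFrom x a + 1 := by
  induction h generalizing x with
  | @comm p q l h =>
    have := desFrom_mono (show p ≤ q by omega) l
    have := desFrom_le_add_one p q l
    simp only [desFrom]
    split_ifs <;> omega
  | braid p l =>
    have := desFrom_mono (show p ≤ p + 1 by omega) l
    have := desFrom_le_add_one p (p + 1) l
    simp only [desFrom]
    split_ifs <;> omega
  | cons p _ ih =>
    have := ih p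
    simp only [desFrom]
    omega

theorem BraidMove.requiredShift_le {a b : List ℕ} (h : BraidMove a b) :
    requiredShift a ≤ requiredShift b + 1 ∧ requiredShift b ≤ requiredShift a + 1 := by
  induction h with
  | @comm p q l h =>
    have := desFrom_mono (show p ≤ q by omega) l
    have := desFrom_le_add_one p q l
    simp only [requiredShift, desFrom]
    split_ifs <;> omega
  | braid p l =>
    have := desFrom_mono (show p ≤ p + 1 by omega) l
    have := desFrom_le_add_one p (p + 1) l
    simp only [requiredShift, desFrom]
    split_ifs <;> omega
  | cons p h ih =>
    have := h.desFrom_le p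
    simp only [requiredShift]
    omega

theorem exists_eqvGen_eq_of_mem_uIcc {α : Type*} {r : α → α → Prop} {f : α → ℕ}
    (hf : ∀ a b, r a b → f a ≤ f b + 1 ∧ f b ≤ f a + 1) {a b : α} (h : Relation.EqvGen r a b)
    {v : ℕ} (hv : v ∈ Set.uIcc (f a) (f b)) : ∃ c, Relation.EqvGen r a c ∧ f c = v := by
  simp only [Set.mem_uIcc] at hv
  induction h with
  | rel a b h =>
    have hab := hf a b h
    rcases (show v = f a ∨ v = f b by omega) with rfl | rfl
    · exact ⟨a, .refl _, rfl⟩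
    · exact ⟨b, .rel _ _ h, rfl⟩
  | refl a => exact ⟨a, .refl _, by omega⟩
  | symm a b h ih =>
    obtain ⟨c, hac, hc⟩ := ih hv.symm
    exact ⟨c, h.symm.trans _ _ _ hac, hc⟩
  | trans a b c hab _ ihab ihbc =>
    by_cases hvab : f a ≤ v ∧ v ≤ f b ∨ f b ≤ v ∧ v ≤ f a
    · exact ihab hvab
    · obtain ⟨d, hbd, hd⟩ := ihbc (by omega)
      exact ⟨d, hab.trans _ _ _ hbd, hd⟩

theorem IsFinitary.exists_sorts_requiredShift_eq {w : Equiv.Perm ℕ} (h : IsFinitary w)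
    (hw : w ≠ 1) {v : ℕ} (hv : (v : ℤ) ≤ eta w) : ∃ l, Sorts l w ∧ requiredShift l = v := by
  obtain ⟨a, ha, hshift⟩ := h.exists_sorts_requiredShift_eq_zero
  obtain ⟨b, hb, heta⟩ := h.exists_sorts_eta_le hw
  obtain ⟨l, hl, hlv⟩ := exists_eqvGen_eq_of_mem_uIcc (f := requiredShift)
    (fun _ _ => BraidMove.requiredShift_le) (ha.eqvGen_braidMove hb)
    (Set.mem_uIcc.mpr (Or.inl ⟨hshift ▸ v.zero_le, by omega⟩))
  exact ⟨l, ha.of_eqvGen hl, hlv⟩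

/-! ### The nil-Coxeter relations -/

/-- The nil-Coxeter relations for a sequence of elements of a ring. -/
structure IsNilCoxeter {B : Type*} [Ring B] (u : ℕ → B) : Prop where
  sq : ∀ i, u i * u i = 0
  far : ∀ {i j}, i + 1 < j → u i * u j = u j * u i
  braid : ∀ i, u i * (u (i + 1) * u i) = u (i + 1) * (u i * u (i + 1))

theorem IsNilCoxeter.map {B B' : Type*} [Ring B] [Ring B'] {u : ℕ → B} (hu : IsNilCoxeter u)
    (f : B →+* B') : IsNilCoxeter fun i => f (u i) where
  sq i := by rw [← map_mul, hu.sq, map_zero]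
  far h := by rw [← map_mul, hu.far h, map_mul]
  braid i := by simp only [← map_mul, hu.braid]

section Algebra

variable {R B : Type*} [CommRing R] [Ring B] [Algebra R B]

theorem one_add_smul_mul_one_add_smul {a : B} (ha : a * a = 0) (x y : R) :
    (1 + x • a) * (1 + y • a) = 1 + (x + y) • a := by
  simp only [mul_add, add_mul, mul_one, one_mul, smul_mul_smul, ha, smul_zero]
  module

theorem yang_baxter {a b : B} (ha : a * a = 0) (hb : b * b = 0)
    (hab : a * (b * a) = b * (a * b)) (x y : R) :
    (1 + x • a) * (1 + (x + y) • b) * (1 + y • a) =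
      (1 + y • b) * (1 + (x + y) • a) * (1 + x • b) := by
  simp only [mul_add, add_mul, mul_one, one_mul, smul_mul_assoc, mul_smul_comm, mul_assoc,
    ha, hb, hab, smul_zero]
  module

/-- The product `(1 + x • u 0) ⋯ (1 + x • u (n - 1))`, the generating function for the products
of the `u i` along strictly increasing words. -/
def incProd (u : ℕ → B) (x : R) (n : ℕ) : B := ((List.range n).map fun i => 1 + x • u i).prod

theorem incProd_succ (u : ℕ → B) (x : R) (n : ℕ) :
    incProd u x (n + 1) = incProd u x n * (1 + x • u n) := by
  simp [incProd, List.range_succ]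

variable {u : ℕ → B}

theorem IsNilCoxeter.mul_incProd (hu : IsNilCoxeter u) (x y : R) (n : ℕ) :
    (1 + y • u (n + 1)) * incProd u x n = incProd u x n * (1 + y • u (n + 1)) := by
  refine Commute.list_prod_right _ _ fun b hb => ?_
  obtain ⟨i, hi, rfl⟩ := List.mem_map.mp hb
  have hcomm : Commute (u (n + 1)) (u i) := (hu.far (by simpa using hi)).symm
  exact (Commute.one_left _).add_left ((Commute.one_right _).add_right
    ((hcomm.smul_left y).smul_right x))

theorem IsNilCoxeter.incProd_succ_mul (hu : IsNilCoxeter u) (x y : R) (n : ℕ) :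
    incProd u x (n + 1) * incProd u y n * (1 + (y - x) • u n) =
      incProd u y (n + 1) * incProd u x n := by
  induction n with
  | zero =>
    simp [incProd, one_add_smul_mul_one_add_smul (hu.sq 0)]
  | succ n ih =>
    have hyb := yang_baxter (hu.sq (n + 1)) (hu.sq n) (hu.braid n).symm x (y - x)
    rw [add_sub_cancel] at hyb
    calc incProd u x (n + 2) * incProd u y (n + 1) * (1 + (y - x) • u (n + 1))
        = incProd u x (n + 1) * ((1 + x • u (n + 1)) * incProd u y n) * (1 + y • u n) *
            (1 + (y - x) • u (n + 1)) := by simp only [incProd_succ _ _ (n + 1),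
              incProd_succ _ y n, mul_assoc]
      _ = incProd u x (n + 1) * incProd u y n *
            ((1 + x • u (n + 1)) * (1 + y • u n) * (1 + (y - x) • u (n + 1))) := by
          rw [hu.mul_incProd]
          simp only [mul_assoc]
      _ = incProd u x (n + 1) * incProd u y n * (1 + (y - x) • u n) *
            ((1 + y • u (n + 1)) * (1 + x • u n)) := by
          rw [hyb]
          simp only [mul_assoc]
      _ = incProd u y (n + 1) * ((1 + y • u (n + 1)) * incProd u x n) * (1 + x • u n) := by
          rw [ih, hu.mul_incProd]
          simp only [mul_assoc]
      _ = incProd u y (n + 2) * incProd u x (n + 1) := by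
          simp only [incProd_succ _ _ (n + 1), incProd_succ _ x n, mul_assoc]

theorem IsNilCoxeter.commute_incProd (hu : IsNilCoxeter u) (x y : R) (n : ℕ) :
    Commute (incProd u x n) (incProd u y n) := by
  cases n with
  | zero => exact Commute.one_left _
  | succ n =>
    have hsplit := one_add_smul_mul_one_add_smul (hu.sq n) (y - x) x
    rw [sub_add_cancel] at hsplit
    rw [Commute, SemiconjBy, incProd_succ u y, ← hsplit, ← mul_assoc, ← mul_assoc,
      hu.incProd_succ_mul, mul_assoc, ← incProd_succ, incProd_succ u y, hsplit]

end Algebra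

section Polynomial

open Polynomial

variable {B : Type*} [Ring B]

theorem coeff_prod_one_add_C_mul_X {ι : Type*} (u : ι → B) (L : List ι) (k : ℕ) :
    (L.map fun i => 1 + C (u i) * X).prod.coeff k =
      ((L.sublistsLen k).map fun l => (l.map u).prod).sum := by
  induction L generalizing k with
  | nil => cases k <;> simp [coeff_one]
  | cons i L ih =>
    rw [List.map_cons, List.prod_cons, add_mul, one_mul, coeff_add, mul_assoc]
    cases k with
    | zero => simp [ih]
    | succ k =>
      simp [ih, coeff_X_mul, List.sublistsLen_succ_cons, Function.comp_def, List.sum_map_mul_left]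

theorem IsNilCoxeter.commute_coeff {u : ℕ → B} (hu : IsNilCoxeter u) (n j k : ℕ) :
    Commute (((List.range n).map fun i => 1 + C (u i) * X).prod.coeff j)
      (((List.range n).map fun i => 1 + C (u i) * X).prod.coeff k) := by
  set p := ((List.range n).map fun i => 1 + C (u i) * X).prod
  -- In `B[X][X]` the polynomials `C p` and `p.map C` are two instances of `incProd`, for the
  -- central parameters `C X` and `X`; the coefficients of their products are the products of
  -- the coefficients of `p`.
  have hX : (X : B[X][X]) ∈ Subring.center B[X][X] :=
    Subring.mem_center_iff.mpr fun q => X_mul.symm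
  have hCX : (C X : B[X][X]) ∈ Subring.center B[X][X] :=
    Subring.mem_center_iff.mpr fun q => by
      ext k : 1
      rw [coeff_mul_C, coeff_C_mul, X_mul]
  have hcomm := ((hu.map C).map (C : B[X] →+* B[X][X])).commute_incProd
    (⟨C X, hCX⟩ : Subring.center B[X][X]) ⟨X, hX⟩ n
  have hC : (C p : B[X][X]) = incProd (fun i => C (C (u i)))
      (⟨C X, hCX⟩ : Subring.center B[X][X]) n := by
    simp [p, incProd, map_list_prod, Function.comp_def, Subring.smul_def,
      Subring.mem_center_iff.mp hCX]
  have hmap : (p.map C : B[X][X]) = incProd (fun i => C (C (u i)))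
      (⟨X, hX⟩ : Subring.center B[X][X]) n := by
    simp [p, incProd, Polynomial.map_list_prod, Function.comp_def, Subring.smul_def]
  rw [← hC, ← hmap] at hcomm
  have hcoeff := congrArg (fun q => (q.coeff k).coeff j) hcomm.eq
  simpa only [Commute, SemiconjBy, coeff_C_mul, coeff_mul_C, coeff_map] using hcoeff

end Polynomial

theorem mem_sublistsLen_range {n k : ℕ} {l : List ℕ} :
    l ∈ (List.range n).sublistsLen k ↔
      l.length = k ∧ l.Pairwise (· < ·) ∧ ∀ i ∈ l, i < n := by
  rw [List.mem_sublistsLen, and_comm, and_congr_right_iff]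
  refine fun _ => ⟨fun h => ⟨List.pairwise_lt_range.sublist h,
    fun i hi => List.mem_range.mp (h.subset hi)⟩, fun ⟨hlt, hmem⟩ => ?_⟩
  exact List.sublist_of_subperm_of_pairwise
    (hlt.nodup.subperm fun i hi => List.mem_range.mpr (hmem i hi)) hlt List.pairwise_lt_range

/-- The words in the letters `0, …, n - 1` that split into strictly increasing blocks of lengths
given by `β`. -/
def splitWords (n : ℕ) : List ℕ → List (List ℕ)
  | [] => [[]]
  | k :: β => ((List.range n).sublistsLen k).flatMap fun l => (splitWords n β).map (l ++ ·)

theorem nodup_splitWords (n : ℕ) (β : List ℕ) : (splitWords n β).Nodup := by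
  induction β with
  | nil => simp [splitWords]
  | cons k β ih =>
    rw [splitWords, List.nodup_flatMap]
    refine ⟨fun l _ => ih.map (List.append_right_injective l), ?_⟩
    refine (List.nodup_sublistsLen k List.nodup_range).imp_of_mem fun {a b} ha hb hab => ?_
    simp only [Function.onFun, List.disjoint_left, List.mem_map, not_exists, not_and]
    rintro l ⟨a', -, rfl⟩ b' - hba
    exact hab (List.append_inj_left hba.symm
      ((mem_sublistsLen_range.mp ha).1.trans (mem_sublistsLen_range.mp hb).1.symm))

section Ring

variable {B : Type*} [Ring B]

theorem sum_splitWords (u : ℕ → B) (n : ℕ) (β : List ℕ) :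
    ((splitWords n β).map fun l => (l.map u).prod).sum =
      (β.map fun k => (((List.range n).sublistsLen k).map fun l => (l.map u).prod).sum).prod := by
  induction β with
  | nil => simp [splitWords]
  | cons k β ih =>
    rw [List.map_cons, List.prod_cons, ← ih, ← List.sum_map_mul_right, splitWords,
      List.map_flatMap, List.flatMap, List.sum_flatten, List.map_map]
    simp [Function.comp_def, List.sum_map_mul_left]

theorem IsNilCoxeter.sum_splitWords_perm {u : ℕ → B} (hu : IsNilCoxeter u) (n : ℕ)
    {β β' : List ℕ} (h : β.Perm β') :
    ((splitWords n β).map fun l => (l.map u).prod).sum =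
      ((splitWords n β').map fun l => (l.map u).prod).sum := by
  simp only [sum_splitWords, ← coeff_prod_one_add_C_mul_X]
  exact (h.map _).prod_eq' (List.pairwise_map.mpr
    (List.pairwise_of_forall fun j k => hu.commute_coeff n j k))

end Ring

/-- The operator on functions of permutations that moves a value along the descent `i`. Products
of these operators enumerate reduced words. -/
def descOp (i : ℕ) : Module.End ℤ (Equiv.Perm ℕ → ℤ) where
  toFun f w := if IsDescent w i then f (w * adjSwap i) else 0
  map_add' f g := by
    ext w
    simp only [Pi.add_apply]
    split_ifs <;> simp
  map_smul' c f := by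
    ext w
    simp only [Pi.smul_apply]
    split_ifs <;> simp

theorem descOp_apply (i : ℕ) (f : Equiv.Perm ℕ → ℤ) (w : Equiv.Perm ℕ) :
    descOp i f w = if IsDescent w i then f (w * adjSwap i) else 0 := rfl

theorem isNilCoxeter_descOp : IsNilCoxeter descOp where
  sq i := by
    ext f w
    simp only [Module.End.mul_apply, descOp_apply, LinearMap.zero_apply, Pi.zero_apply]
    grind [not_isDescent_mul_adjSwap]
  far {i j} h := by
    ext f w
    simp only [Module.End.mul_apply, descOp_apply, IsDescent, Equiv.Perm.mul_apply,
      adjSwap_apply, mul_assoc, adjSwap_mul_comm h]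
    grind
  braid i := by
    ext f w
    simp only [Module.End.mul_apply, descOp_apply, IsDescent, Equiv.Perm.mul_apply,
      adjSwap_apply, mul_assoc, adjSwap_mul_mul]
    grind

theorem prod_descOp_apply (l : List ℕ) (w : Equiv.Perm ℕ) :
    (l.map descOp).prod (Pi.single 1 1) w = if Sorts l w then 1 else 0 := by
  induction l generalizing w with
  | nil =>
    simp only [List.map_nil, List.prod_nil, Module.End.one_apply, Pi.single_apply, Sorts]
    congr
  | cons p l ih =>
    rw [List.map_cons, List.prod_cons, Module.End.mul_apply, descOp_apply, ih]
    by_cases hp : IsDescent w p <;> simp [Sorts, hp]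

theorem card_redWords_filter_mem_splitWords (w : Equiv.Perm ℕ) (n : ℕ) (β : List ℕ) :
    ((redWords w).filter (· ∈ splitWords n β)).card =
      ((splitWords n β).map fun l => (l.map descOp).prod).sum (Pi.single 1 1) w := by
  have hfilter : (redWords w).filter (· ∈ splitWords n β) =
      (splitWords n β).toFinset.filter (Sorts · w) := by
    ext l
    simp [mem_redWords, and_comm]
  simp only [hfilter, Finset.card_filter, Nat.cast_sum, Nat.cast_ite, Nat.cast_one, Nat.cast_zero]
  rw [List.sum_toFinset _ (nodup_splitWords n β)]
  induction splitWords n β with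
  | nil => simp
  | cons l W ih => simp [ih, prod_descOp_apply]

theorem card_splitWords_perm (w : Equiv.Perm ℕ) (n : ℕ) {β β' : List ℕ} (h : β.Perm β') :
    ((redWords w).filter (· ∈ splitWords n β)).card =
      ((redWords w).filter (· ∈ splitWords n β')).card := by
  zify
  rw [card_redWords_filter_mem_splitWords, card_redWords_filter_mem_splitWords,
    isNilCoxeter_descOp.sum_splitWords_perm n h]

/-! ### Partial sums and refinement -/

/-- The set of partial sums of a composition. -/
def partialSums (α : List ℕ) : Set ℕ := {c | ∃ k, (α.take k).sum = c}

theorem zero_mem_partialSums (α : List ℕ) : 0 ∈ partialSums α := ⟨0, by simp⟩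

theorem sum_mem_partialSums (α : List ℕ) : α.sum ∈ partialSums α := ⟨α.length, by simp⟩

theorem mem_partialSums_nil {c : ℕ} : c ∈ partialSums [] ↔ c = 0 := by
  simp [partialSums, eq_comm]

theorem mem_partialSums_cons {a c : ℕ} {α : List ℕ} :
    c ∈ partialSums (a :: α) ↔ c = 0 ∨ a ≤ c ∧ c - a ∈ partialSums α := by
  constructor
  · rintro ⟨_ | k, rfl⟩
    · exact Or.inl rfl
    · exact Or.inr ⟨by simp, k, by simp⟩
  · rintro (rfl | ⟨hle, k, hk⟩)
    · exact zero_mem_partialSums _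
    · refine ⟨k + 1, ?_⟩
      rw [List.take_succ_cons, List.sum_cons, hk, Nat.add_sub_cancel' hle]

theorem mem_partialSums_append {c : ℕ} {α β : List ℕ} :
    c ∈ partialSums (α ++ β) ↔ c ∈ partialSums α ∨ α.sum ≤ c ∧ c - α.sum ∈ partialSums β := by
  induction α generalizing c with
  | nil => simpa [mem_partialSums_nil] using fun h : c = 0 => h ▸ zero_mem_partialSums β
  | cons a α ih =>
    rw [List.cons_append, mem_partialSums_cons, mem_partialSums_cons, ih, List.sum_cons,
      Nat.sub_sub]
    grind

theorem le_sum_of_mem_partialSums {c : ℕ} {α : List ℕ} (h : c ∈ partialSums α) : c ≤ α.sum := by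
  obtain ⟨k, rfl⟩ := h
  have := List.sum_take_add_sum_drop α k
  omega

theorem sub_mem_partialSums_reverse {c : ℕ} {α : List ℕ} (h : c ∈ partialSums α) :
    α.sum - c ∈ partialSums α.reverse := by
  obtain ⟨k, rfl⟩ := h
  refine ⟨α.length - k, ?_⟩
  have := List.sum_take_add_sum_drop α k
  rw [← List.reverse_drop, List.sum_reverse]
  omega

theorem mem_partialSums_reverse {c : ℕ} {α : List ℕ} :
    c ∈ partialSums α.reverse ↔ c ≤ α.sum ∧ α.sum - c ∈ partialSums α := by
  constructor
  · intro h
    exact ⟨List.sum_reverse α ▸ le_sum_of_mem_partialSums h,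
      by simpa using sub_mem_partialSums_reverse h⟩
  · rintro ⟨hle, h⟩
    simpa [Nat.sub_sub_self hle] using sub_mem_partialSums_reverse h

theorem partialSums_reverse_subset {α β : List ℕ} (hsum : α.sum = β.sum)
    (h : partialSums α ⊆ partialSums β) : partialSums α.reverse ⊆ partialSums β.reverse := by
  intro c hc
  rw [mem_partialSums_reverse] at hc ⊢
  exact ⟨hsum ▸ hc.1, hsum ▸ h hc.2⟩

theorem refines_cons {a : ℕ} {α β : List ℕ} :
    Refines β (a :: α) ↔ ∃ β₁ β₂, β₁ ++ β₂ = β ∧ β₁.sum = a ∧ Refines β₂ α := by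
  constructor
  · rintro ⟨_ | ⟨β₁, L⟩, rfl, h⟩
    · simp at h
    · rw [List.map_cons, List.cons.injEq] at h
      exact ⟨β₁, L.flatten, rfl, h.1, L, rfl, h.2⟩
  · rintro ⟨β₁, β₂, rfl, rfl, L, rfl, rfl⟩
    exact ⟨β₁ :: L, rfl, rfl⟩

theorem Refines.sum_eq {α β : List ℕ} (h : Refines β α) : β.sum = α.sum := by
  obtain ⟨L, rfl, rfl⟩ := h
  exact List.sum_flatten

theorem Refines.partialSums_subset {α β : List ℕ} (h : Refines β α) :
    partialSums α ⊆ partialSums β := by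
  obtain ⟨L, rfl, rfl⟩ := h
  rintro _ ⟨k, rfl⟩
  refine ⟨(L.take k).flatten.length, ?_⟩
  have hsplit : L.flatten = (L.take k).flatten ++ (L.drop k).flatten := by
    rw [← List.flatten_append, List.take_append_drop]
  rw [hsplit, List.take_left, ← List.map_take, List.sum_flatten]

theorem refines_of_partialSums_subset {α β : List ℕ} (hβ : ∀ b ∈ β, 0 < b)
    (hsum : β.sum = α.sum) (hsub : partialSums α ⊆ partialSums β) : Refines β α := by
  induction α generalizing β with
  | nil =>
    refine ⟨[], (List.eq_nil_iff_forall_not_mem.mpr fun b hb => ?_).symm, rfl⟩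
    exact (hβ b hb).ne' (List.sum_eq_zero_iff.mp hsum b hb)
  | cons a α ih =>
    have ha : a ∈ partialSums (a :: α) :=
      mem_partialSums_cons.mpr (Or.inr ⟨le_rfl, by simpa using zero_mem_partialSums α⟩)
    obtain ⟨k, hk⟩ := hsub ha
    have hsplit := List.sum_take_add_sum_drop β k
    rw [hk, hsum, List.sum_cons] at hsplit
    refine refines_cons.mpr ⟨β.take k, β.drop k, List.take_append_drop k β, hk,
      ih (fun b hb => hβ b (List.mem_of_mem_drop hb)) (by omega) fun c hc => ?_⟩
    have hac : a + c ∈ partialSums (a :: α) := mem_partialSums_cons.mpr (Or.inr (by simpa using hc))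
    have hmem := hsub hac
    rw [← List.take_append_drop k β, mem_partialSums_append, hk] at hmem
    rcases hmem with hmem | ⟨-, hmem⟩
    · have hle := le_sum_of_mem_partialSums hmem
      rw [show c = 0 by omega]
      exact zero_mem_partialSums _
    · rwa [Nat.add_sub_cancel_left] at hmem

theorem refines_iff {α β : List ℕ} (hβ : ∀ b ∈ β, 0 < b) :
    Refines β α ↔ β.sum = α.sum ∧ partialSums α ⊆ partialSums β :=
  ⟨fun h => ⟨h.sum_eq, h.partialSums_subset⟩, fun h => refines_of_partialSums_subset hβ h.1 h.2⟩

/-- The set of positions at which consecutive entries of a list are related by `R`; the position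
between the entries of index `k` and `k + 1` is numbered `k + 1`. -/
def breaks {A : Type*} (R : A → A → Prop) (l : List A) : Set ℕ :=
  {c | ∃ k x y, l[k]? = some x ∧ l[k + 1]? = some y ∧ R x y ∧ c = k + 1}

section Breaks

variable {A : Type*} {R : A → A → Prop} {l : List A} {c : ℕ}

theorem breaks_nil (R : A → A → Prop) : breaks R [] = ∅ := by
  ext c
  simp [breaks]

theorem breaks_singleton (R : A → A → Prop) (x : A) : breaks R [x] = ∅ := by
  ext c
  simp [breaks]

theorem mem_breaks_cons_cons {x y : A} :
    c ∈ breaks R (x :: y :: l) ↔ c = 1 ∧ R x y ∨ 1 ≤ c ∧ c - 1 ∈ breaks R (y :: l) := by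
  constructor
  · rintro ⟨_ | k, a, b, ha, hb, hR, rfl⟩
    · simp only [List.getElem?_cons_zero, Option.some.injEq, List.getElem?_cons_succ] at ha hb
      subst ha hb
      exact Or.inl ⟨rfl, hR⟩
    · rw [List.getElem?_cons_succ] at ha hb
      exact Or.inr ⟨by omega, k, a, b, ha, hb, hR, rfl⟩
  · rintro (⟨rfl, hR⟩ | ⟨hc, k, a, b, ha, hb, hR, hk⟩)
    · exact ⟨0, x, y, rfl, rfl, hR, rfl⟩
    · exact ⟨k + 1, a, b, ha, hb, hR, by omega⟩

theorem pos_of_mem_breaks (h : c ∈ breaks R l) : 0 < c := by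
  obtain ⟨k, -, -, -, -, -, rfl⟩ := h
  exact k.succ_pos

theorem lt_length_of_mem_breaks (h : c ∈ breaks R l) : c < l.length := by
  obtain ⟨k, x, y, -, hy, -, rfl⟩ := h
  exact (List.getElem?_eq_some_iff.mp hy).1

theorem mem_breaks_append {l₁ l₂ : List A} (h : c ∈ breaks R (l₁ ++ l₂)) :
    c ∈ breaks R l₁ ∨ c = l₁.length ∨ l₁.length ≤ c ∧ c - l₁.length ∈ breaks R l₂ := by
  obtain ⟨k, x, y, hx, hy, hR, rfl⟩ := h
  rcases lt_trichotomy (k + 1) l₁.length with hk | hk | hk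
  · rw [List.getElem?_append_left (by omega)] at hx hy
    exact Or.inl ⟨k, x, y, hx, hy, hR, rfl⟩
  · exact Or.inr (Or.inl hk)
  · rw [List.getElem?_append_right (by omega)] at hx hy
    rw [show k + 1 - l₁.length = k - l₁.length + 1 by omega] at hy
    exact Or.inr (Or.inr ⟨hk.le, k - l₁.length, x, y, hx, hy, hR, by omega⟩)

theorem mem_breaks_of_mem_breaks_take {b : ℕ} (h : c ∈ breaks R (l.take b)) :
    c ∈ breaks R l := by
  obtain ⟨k, x, y, hx, hy, hR, rfl⟩ := h
  rw [List.getElem?_take] at hx hy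
  exact ⟨k, x, y, (ite_eq_iff.mp hx).elim And.right (by simp),
    (ite_eq_iff.mp hy).elim And.right (by simp), hR, rfl⟩

theorem add_mem_breaks_of_mem_breaks_drop {b : ℕ} (h : c ∈ breaks R (l.drop b)) :
    b + c ∈ breaks R l := by
  obtain ⟨k, x, y, hx, hy, hR, rfl⟩ := h
  rw [List.getElem?_drop] at hx hy
  exact ⟨b + k, x, y, hx, hy, hR, rfl⟩

end Breaks

theorem pairwise_lt_iff_breaks_eq_empty {l : List ℕ} :
    l.Pairwise (· < ·) ↔ breaks (· ≥ ·) l = ∅ := by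
  rw [← List.isChain_iff_pairwise, Set.eq_empty_iff_forall_notMem, List.isChain_iff_getElem]
  constructor
  · rintro h c ⟨k, x, y, hx, hy, hle, -⟩
    obtain ⟨hk, rfl⟩ := List.getElem?_eq_some_iff.mp hy
    obtain ⟨_, rfl⟩ := List.getElem?_eq_some_iff.mp hx
    exact (h k hk).not_ge hle
  · intro h k hk
    by_contra hle
    exact h (k + 1) ⟨k, l[k], l[k + 1], List.getElem?_eq_getElem _, List.getElem?_eq_getElem hk,
      not_lt.mp hle, rfl⟩

theorem mem_splitWords_iff {n : ℕ} {β l : List ℕ} (hl : ∀ i ∈ l, i < n) :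
    l ∈ splitWords n β ↔ β.sum = l.length ∧ breaks (· ≥ ·) l ⊆ partialSums β := by
  induction β generalizing l with
  | nil =>
    simp only [splitWords, List.mem_singleton, List.sum_nil]
    refine ⟨?_, fun h => List.length_eq_zero_iff.mp h.1.symm⟩
    rintro rfl
    exact ⟨rfl, by simp [breaks_nil]⟩
  | cons b β ih =>
    simp only [splitWords, List.mem_flatMap, List.mem_map, mem_sublistsLen_range,
      pairwise_lt_iff_breaks_eq_empty]
    constructor
    · rintro ⟨l₁, ⟨rfl, hinc, -⟩, l₂, hl₂, rfl⟩
      obtain ⟨hsum, hsub⟩ := (ih fun i hi => hl i (List.mem_append_right _ hi)).mp hl₂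
      refine ⟨by rw [List.sum_cons, hsum, List.length_append], fun c hc => ?_⟩
      rw [mem_partialSums_cons]
      rcases mem_breaks_append hc with hc | rfl | ⟨hle, hc⟩
      · simp [hinc] at hc
      · exact Or.inr ⟨le_rfl, by simpa using zero_mem_partialSums β⟩
      · exact Or.inr ⟨hle, hsub hc⟩
    · rintro ⟨hsum, hsub⟩
      rw [List.sum_cons] at hsum
      refine ⟨l.take b, ⟨by rw [List.length_take]; omega, ?_,
        fun i hi => hl i (List.mem_of_mem_take hi)⟩, l.drop b, ?_, List.take_append_drop b l⟩
      · refine Set.eq_empty_iff_forall_notMem.mpr fun c hc => ?_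
        have hpos := pos_of_mem_breaks hc
        have hlt := lt_length_of_mem_breaks hc
        rw [List.length_take] at hlt
        rcases mem_partialSums_cons.mp (hsub (mem_breaks_of_mem_breaks_take hc)) with h | ⟨h, -⟩ <;>
          omega
      · refine (ih fun i hi => hl i (List.mem_of_mem_drop hi)).mpr
          ⟨by rw [List.length_drop]; omega, fun c hc => ?_⟩
        have hpos := pos_of_mem_breaks hc
        rcases mem_partialSums_cons.mp (hsub (add_mem_breaks_of_mem_breaks_drop hc)) with h | h
        · omega
        · simpa using h.2

/-! ### Descent compositions and the Stanley symmetric function -/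

theorem exists_runsStrict_cons (y : ℕ) (l : List ℕ) :
    ∃ r R, runsStrict (y :: l) = (y :: r) :: R := by
  induction l generalizing y with
  | nil => exact ⟨[], [], rfl⟩
  | cons z l ih =>
    obtain ⟨r, R, h⟩ := ih z
    simp only [runsStrict] at h ⊢
    rw [h]
    by_cases hyz : y < z
    · exact ⟨z :: r, R, if_pos hyz⟩
    · exact ⟨[], (z :: r) :: R, if_neg hyz⟩

theorem desStrict_cons_cons (x y : ℕ) (l : List ℕ) :
    ∃ d D, 1 ≤ d ∧ desStrict (y :: l) = d :: D ∧
      desStrict (x :: y :: l) = if x < y then (d + 1) :: D else 1 :: d :: D := by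
  obtain ⟨r, R, h⟩ := exists_runsStrict_cons y l
  refine ⟨r.length + 1, R.map List.length, by omega, by simp [desStrict, h], ?_⟩
  have hcons : runsStrict (x :: y :: l) =
      if x < y then (x :: y :: r) :: R else [x] :: (y :: r) :: R := by
    simp only [runsStrict] at h ⊢
    rw [h]
  rw [desStrict, hcons]
  split_ifs <;> simp

theorem sum_desStrict (l : List ℕ) : (desStrict l).sum = l.length := by
  induction l with
  | nil => rfl
  | cons x l ih =>
    cases l with
    | nil => rfl
    | cons y l =>
      obtain ⟨d, D, -, hy, hx⟩ := desStrict_cons_cons x y l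
      rw [hy] at ih
      rw [hx]
      split_ifs <;> simp only [List.sum_cons, List.length_cons] at ih ⊢ <;> omega

theorem mem_partialSums_desStrict {l : List ℕ} {c : ℕ} :
    c ∈ partialSums (desStrict l) ↔ c = 0 ∨ c = l.length ∨ c ∈ breaks (· ≥ ·) l := by
  induction l generalizing c with
  | nil => simp [desStrict, runsStrict, mem_partialSums_nil, breaks_nil]
  | cons x l ih =>
    cases l with
    | nil =>
      simp only [desStrict, runsStrict, List.map_cons, List.map_nil, mem_partialSums_cons,
        mem_partialSums_nil, breaks_singleton, List.length_cons, List.length_nil,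
        Set.mem_empty_iff_false, or_false]
      omega
    | cons y l =>
      obtain ⟨d, D, hd, hy, hx⟩ := desStrict_cons_cons x y l
      have hpred := ih (c := c - 1)
      have hpos : c - 1 ∈ breaks (· ≥ ·) (y :: l) → 0 < c - 1 := pos_of_mem_breaks
      rw [hy] at hpred
      rw [hx, mem_breaks_cons_cons]
      split_ifs with hxy
      · simp only [mem_partialSums_cons, List.length_cons, hxy.not_ge, and_false,
          false_or] at hpred ⊢
        rw [Nat.sub_sub, Nat.add_comm 1 d] at hpred
        grind
      · rw [mem_partialSums_cons, hpred]
        simp only [List.length_cons, not_lt.mp hxy, ge_iff_le, and_true]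
        grind

/-- The nonzero values of a finitely supported function, in order. -/
noncomputable def flatFinsupp (d : ℕ →₀ ℕ) : List ℕ := (d.support.sort (· ≤ ·)).map d

theorem flatFinsupp_pos (d : ℕ →₀ ℕ) : ∀ x ∈ flatFinsupp d, 0 < x := by
  intro x hx
  obtain ⟨i, hi, rfl⟩ := List.mem_map.mp hx
  rw [Finset.mem_sort, Finsupp.mem_support_iff] at hi
  exact Nat.pos_of_ne_zero hi

theorem flatFinsupp_sum_single {k : ℕ} {i : Fin k → ℕ} (hi : StrictMono i) {g : Fin k → ℕ}
    (hg : ∀ t, 0 < g t) : flatFinsupp (∑ t, Finsupp.single (i t) (g t)) = List.ofFn g := by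
  set d := ∑ t, Finsupp.single (i t) (g t) with hd
  have happly : ∀ j, d j = ∑ t, if i t = j then g t else 0 := fun j => by
    simp [hd, Finsupp.finsetSum_apply, Finsupp.single_apply]
  have hdi : d ∘ i = g := funext fun s => by
    simp [happly, hi.injective.eq_iff]
  have hsupp : d.support = (List.ofFn i).toFinset := by
    ext j
    simp only [Finsupp.mem_support_iff, List.mem_toFinset, List.mem_ofFn]
    refine ⟨fun hj => ?_, ?_⟩
    · by_contra hne
      exact hj ((happly j).trans (Finset.sum_eq_zero fun t _ => if_neg fun h => hne ⟨t, h⟩))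
    · rintro ⟨t, rfl⟩
      exact (congrFun hdi t).trans_ne (hg t).ne'
  have hsort : d.support.sort (· ≤ ·) = List.ofFn i := by
    rw [hsupp]
    exact (List.toFinset_sort (· ≤ ·) (List.nodup_ofFn.mpr hi.injective)).mpr
      (List.pairwise_ofFn.mpr fun s t hst => (hi hst).le)
  rw [flatFinsupp, hsort, List.map_ofFn, hdi]

theorem exists_sum_single_flatFinsupp (d : ℕ →₀ ℕ) :
    ∃ i : Fin (flatFinsupp d).length → ℕ, StrictMono i ∧
      d = ∑ t, Finsupp.single (i t) ((flatFinsupp d).get t) := by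
  have hlen : (flatFinsupp d).length = (d.support.sort (· ≤ ·)).length := List.length_map _
  refine ⟨fun t => (d.support.sort (· ≤ ·)).get (Fin.cast hlen t), fun s t hst => ?_, ?_⟩
  · exact List.pairwise_iff_getElem.mp (Finset.sortedLT_sort d.support).pairwise _ _ _ _ hst
  · calc d = ((d.support.sort (· ≤ ·)).map fun j => Finsupp.single j (d j)).sum := by
          rw [← List.sum_toFinset _ (Finset.sort_nodup _ _), Finset.sort_toFinset]
          exact (Finsupp.sum_single d).symm
      _ = ∑ t, Finsupp.single ((d.support.sort (· ≤ ·)).get t)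
            (d ((d.support.sort (· ≤ ·)).get t)) :=
          (Fin.sum_univ_fun_getElem _ fun j => Finsupp.single j (d j)).symm
      _ = _ := by
          rw [← (finCongr hlen).sum_comp]
          simp only [flatFinsupp, List.get_eq_getElem, List.getElem_map]
          rfl

theorem coeff_MqsFun {α : List ℕ} (hα : ∀ x ∈ α, 0 < x) (d : ℕ →₀ ℕ) :
    MvPowerSeries.coeff d (MqsFun α) = if α = flatFinsupp d then 1 else 0 := by
  refine if_congr ⟨?_, ?_⟩ rfl rfl
  · rintro ⟨i, hi, rfl⟩
    rw [flatFinsupp_sum_single hi fun t => hα _ (List.get_mem _ _), List.ofFn_get]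
  · rintro rfl
    exact exists_sum_single_flatFinsupp d

theorem coeff_FqsFun (α : List ℕ) (d : ℕ →₀ ℕ) :
    MvPowerSeries.coeff d (FqsFun α) = if Refines (flatFinsupp d) α then 1 else 0 := by
  simp only [FqsFun, map_sum, coeff_MqsFun fun _ hx => Composition.blocks_pos _ hx]
  split_ifs with h
  · rw [Finset.sum_eq_single (⟨flatFinsupp d, fun hx => flatFinsupp_pos d _ hx, h.sum_eq⟩ :
      Composition α.sum)]
    · exact if_pos rfl
    · exact fun c _ hc => if_neg fun hblocks => hc (Composition.ext hblocks)
    · exact fun hmem =>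
        (hmem (Finset.mem_filter.mpr ⟨@Finset.mem_univ (Composition _) _ _, h⟩)).elim
  · refine Finset.sum_eq_zero fun c hc => if_neg fun hblocks => h ?_
    exact hblocks ▸ (Finset.mem_filter.mp hc).2

theorem stanleySym_eq_sum_redWords (w : Equiv.Perm ℕ) :
    StanleySym w = ∑ l ∈ redWords w, FqsFun (desStrict l) := by
  rw [StanleySym, ← finsum_mem_coe_finset]
  congr! 3 with l
  simp [mem_redWords, sorts_iff]

theorem refines_desStrict_iff {n : ℕ} {β l : List ℕ} (hβ : ∀ b ∈ β, 0 < b)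
    (hl : ∀ i ∈ l, i < n) : Refines β (desStrict l) ↔ l ∈ splitWords n β := by
  rw [refines_iff hβ, sum_desStrict, mem_splitWords_iff hl]
  refine and_congr_right fun hsum => ⟨fun h c hc => h ?_, fun h c hc => ?_⟩
  · exact mem_partialSums_desStrict.mpr (Or.inr (Or.inr hc))
  · rcases mem_partialSums_desStrict.mp hc with rfl | rfl | hc
    · exact zero_mem_partialSums _
    · exact hsum ▸ sum_mem_partialSums _
    · exact h hc

theorem card_refines_desStrict {w : Equiv.Perm ℕ} (hw : IsFinitary w) {β β' : List ℕ}
    (hβ : ∀ b ∈ β, 0 < b) (h : β.Perm β') :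
    ((redWords w).filter fun l => Refines β (desStrict l)).card =
      ((redWords w).filter fun l => Refines β' (desStrict l)).card := by
  obtain ⟨N, hN⟩ := hw
  have hiff : ∀ β : List ℕ, (∀ b ∈ β, 0 < b) → ∀ l ∈ redWords w,
      (Refines β (desStrict l) ↔ l ∈ splitWords N β) := fun β hβ l hl =>
    refines_desStrict_iff hβ (hN.lt_of_mem_sorts (mem_redWords.mp hl))
  rw [Finset.filter_congr (hiff β hβ),
    Finset.filter_congr (hiff β' fun b hb => hβ b (h.mem_iff.mpr hb))]
  exact card_splitWords_perm w N h

/-- The symmetry of `S_w`, in the form that is needed: descent compositions may be reversed. -/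
theorem stanleySym_eq_of_partialSums {w : Equiv.Perm ℕ} (hw : IsFinitary w)
    {α : List ℕ → List ℕ} (hsum : ∀ l ∈ redWords w, (α l).sum = l.length)
    (hα : ∀ l ∈ redWords w, ∀ c, c ∈ partialSums (α l) ↔
      c ≤ l.length ∧ l.length - c ∈ partialSums (desStrict l)) :
    StanleySym w = ∑ l ∈ redWords w, FqsFun (α l) := by
  rw [stanleySym_eq_sum_redWords]
  ext d
  simp only [map_sum, coeff_FqsFun, Finset.sum_boole]
  have hpos := flatFinsupp_pos d
  rw [card_refines_desStrict hw hpos (flatFinsupp d).reverse_perm.symm]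
  congr 2
  refine Finset.filter_congr fun l hl => ?_
  have hrev : partialSums (α l) = partialSums (desStrict l).reverse := by
    ext c
    rw [hα l hl, mem_partialSums_reverse, sum_desStrict]
  rw [refines_iff (by simpa using hpos), refines_iff hpos, hrev, List.sum_reverse,
    sum_desStrict, hsum l hl]
  refine and_congr_right fun hlen => ⟨fun h => ?_, fun h => ?_⟩
  · simpa using partialSums_reverse_subset (by simp [sum_desStrict, hlen]) h
  · simpa using partialSums_reverse_subset (by simp [sum_desStrict, hlen]) h

/-! ### Weak compositions as decreasing lists of rows -/

theorem psum_zero {n : ℕ} (a : Fin n → ℕ) : psum a 0 = 0 := by simp [psum]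

theorem psum_succ {n : ℕ} (a : Fin n → ℕ) {j : ℕ} (hj : j < n) :
    psum a (j + 1) = psum a j + a ⟨j, hj⟩ := by
  have hinsert : (Finset.univ.filter fun i : Fin n => (i : ℕ) < j + 1) =
      insert ⟨j, hj⟩ (Finset.univ.filter fun i : Fin n => (i : ℕ) < j) := by
    ext i
    simp only [Finset.mem_filter, Finset.mem_univ, true_and, Finset.mem_insert, Fin.ext_iff]
    omega
  rw [psum, hinsert, Finset.sum_insert (by simp), add_comm]
  rfl

theorem psum_of_le {n : ℕ} (a : Fin n → ℕ) {j : ℕ} (hj : n ≤ j) : psum a j = ∑ i, a i := by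
  rw [psum, Finset.filter_true_of_mem fun i _ => by omega]

theorem psum_injective {n : ℕ} {a b : Fin n → ℕ} (h : ∀ i : Fin (n + 1), psum a i = psum b i) :
    a = b := by
  funext i
  have hcast := h i.castSucc
  have hsucc := h i.succ
  rw [Fin.val_castSucc] at hcast
  rw [Fin.val_succ, psum_succ a i.2, psum_succ b i.2, hcast] at hsucc
  exact Nat.add_left_cancel hsucc

theorem sum_take_ofFn {n : ℕ} (a : Fin n → ℕ) (j : ℕ) :
    ((List.ofFn a).take j).sum = psum a j := by
  induction j with
  | zero => simp [psum_zero]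
  | succ j ih =>
    by_cases hj : j < n
    · rw [List.take_add_one, List.sum_append, ih, psum_succ a hj]
      simp [hj]
    · rw [List.take_of_length_le (by simp; omega), psum_of_le a (by omega), List.sum_ofFn]

theorem mem_partialSums_filter_ne_zero {α : List ℕ} {c : ℕ} :
    c ∈ partialSums (α.filter fun x => x ≠ 0) ↔ c ∈ partialSums α := by
  induction α generalizing c with
  | nil => rfl
  | cons a α ih =>
    rw [List.filter_cons, mem_partialSums_cons]
    by_cases ha : a = 0
    · rw [if_neg (by simpa using ha), ih, ha, Nat.sub_zero]
      exact ⟨fun h => Or.inr ⟨Nat.zero_le _, h⟩, fun h => h.elim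
        (fun h => h ▸ zero_mem_partialSums _) And.right⟩
    · rw [if_pos (by simpa using ha), mem_partialSums_cons, ih]

theorem mem_partialSums_flat {n : ℕ} {a : Fin n → ℕ} {c : ℕ} :
    c ∈ partialSums (flat a) ↔ ∃ j ≤ n, psum a j = c := by
  rw [flat, mem_partialSums_filter_ne_zero]
  constructor
  · rintro ⟨j, rfl⟩
    rcases le_total j n with hj | hj
    · exact ⟨j, hj, (sum_take_ofFn a j).symm⟩
    · exact ⟨n, le_rfl, by rw [sum_take_ofFn, psum_of_le a le_rfl, psum_of_le a hj]⟩
  · rintro ⟨j, -, rfl⟩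
    exact ⟨j, sum_take_ofFn a j⟩

theorem sum_flat {n : ℕ} (a : Fin n → ℕ) : (flat a).sum = ∑ i, a i := by
  rw [flat, ← List.sum_ofFn, ← List.sum_filter_bne_zero (List.ofFn a)]
  congr! 2
  ext x
  simp [bne, beq_eq_decide]

theorem flat_pos {n : ℕ} (a : Fin n → ℕ) : ∀ x ∈ flat a, 0 < x := by
  intro x hx
  rw [flat, List.mem_filter] at hx
  simpa [Nat.pos_iff_ne_zero] using hx.2

theorem refines_flat_iff {n : ℕ} {a b : Fin n → ℕ} :
    Refines (flat b) (flat a) ↔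
      ∑ i, b i = ∑ i, a i ∧ partialSums (flat a) ⊆ partialSums (flat b) := by
  rw [refines_iff (flat_pos _), sum_flat, sum_flat]

section Antitone

variable {r : List ℤ}

theorem countP_lt_add_one (r : List ℤ) (t : ℤ) :
    r.countP (fun x => decide (x < t + 1)) = r.countP (fun x => decide (x < t)) + r.count t := by
  induction r with
  | nil => rfl
  | cons x r ih =>
    simp only [List.countP_cons, List.count_cons, ih, beq_iff_eq, decide_eq_true_eq]
    split_ifs <;> omega

theorem countP_lt_le_countP_lt {s : List ℤ} (h : List.Forall₂ (· ≤ ·) r s) (t : ℤ) :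
    s.countP (fun x => decide (x < t)) ≤ r.countP fun x => decide (x < t) := by
  induction h with
  | nil => exact le_rfl
  | cons hxy _ ih =>
    simp only [List.countP_cons, decide_eq_true_eq]
    split_ifs <;> omega

theorem getElem_lt_iff (h : r.Pairwise (· ≥ ·)) {k : ℕ} (hk : k < r.length) (t : ℤ) :
    r[k] < t ↔ r.length ≤ k + r.countP fun x => decide (x < t) := by
  induction r generalizing k with
  | nil => simp at hk
  | cons x r ih =>
    rw [List.pairwise_cons] at h
    have hle : r.countP (fun x => decide (x < t)) ≤ r.length := List.countP_le_length
    have hall : x < t → r.countP (fun x => decide (x < t)) = r.length := fun hx =>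
      List.countP_eq_length.mpr fun y hy => decide_eq_true ((h.1 y hy).trans_lt hx)
    rw [List.countP_cons, List.length_cons]
    simp only [decide_eq_true_eq]
    cases k with
    | zero =>
      rw [List.getElem_cons_zero]
      split_ifs with hx <;> omega
    | succ k =>
      rw [List.getElem_cons_succ, ih h.2 (by simpa using hk)]
      split_ifs with hx <;> omega

theorem length_sub_countP_lt_mem_breaks (h : r.Pairwise (· ≥ ·)) (t : ℤ)
    (hpos : r.countP (fun x => decide (x < t)) ≠ 0)
    (hne : r.countP (fun x => decide (x < t)) ≠ r.length) :
    r.length - r.countP (fun x => decide (x < t)) ∈ breaks (· > ·) r := by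
  have hle : r.countP (fun x => decide (x < t)) ≤ r.length := List.countP_le_length
  have hlt := fun {k} (hk : k < r.length) => getElem_lt_iff h hk t
  generalize r.countP (fun x => decide (x < t)) = c at *
  have hk : r.length - c - 1 + 1 < r.length := by omega
  refine ⟨r.length - c - 1, _, _, List.getElem?_eq_getElem (by omega),
    List.getElem?_eq_getElem hk, ?_, by omega⟩
  exact ((hlt hk).mpr (by omega)).trans_le (not_lt.mp fun h => by have := (hlt _).mp h; omega)

theorem countP_lt_getElem (h : r.Pairwise (· ≥ ·)) {k : ℕ} (hk : k + 1 < r.length)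
    (hlt : r[k + 1] < r[k]) : r.countP (fun x => decide (x < r[k])) = r.length - (k + 1) := by
  have hk' := getElem_lt_iff h (k := k) (by omega) r[k]
  have hk'' := (getElem_lt_iff h hk r[k]).mp hlt
  simp only [lt_self_iff_false, false_iff] at hk'
  omega

end Antitone

/-- The weak composition of length `n` counting the entries of a list of rows, the rows being
numbered from `-m`. With this numbering, prepending zeros to the composition increases `m` and
leaves the list alone. -/
def rowWeight (m n : ℕ) (r : List ℤ) : Fin n → ℕ := fun i => r.count ((i : ℤ) - m)

/-- Weakly decreasing lists of row numbers between `-m` and `n - m - 1`: by `rowWeight m n` these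
correspond to the weak compositions of length `n`. -/
structure IsRowList (m n : ℕ) (r : List ℤ) : Prop where
  antitone : r.Pairwise (· ≥ ·)
  neg_le : ∀ x ∈ r, -(m : ℤ) ≤ x
  lt_sub : ∀ x ∈ r, x < (n : ℤ) - m

namespace IsRowList

variable {m n : ℕ} {r s : List ℤ}

theorem psum_rowWeight (h : IsRowList m n r) {j : ℕ} (hj : j ≤ n) :
    psum (rowWeight m n r) j = r.countP fun x => decide (x < (j : ℤ) - m) := by
  induction j with
  | zero =>
    rw [psum_zero, eq_comm, List.countP_eq_zero]
    intro x hx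
    simpa using h.neg_le x hx
  | succ j ih =>
    rw [psum_succ _ hj, ih (by omega), Nat.cast_succ, add_sub_right_comm, countP_lt_add_one]
    rfl

theorem sum_rowWeight (h : IsRowList m n r) : ∑ i, rowWeight m n r i = r.length := by
  rw [← psum_of_le _ le_rfl, h.psum_rowWeight le_rfl, List.countP_eq_length]
  intro x hx
  simpa using h.lt_sub x hx

theorem mem_partialSums_flat_rowWeight (h : IsRowList m n r) {c : ℕ} :
    c ∈ partialSums (flat (rowWeight m n r)) ↔
      c ≤ r.length ∧ (c = 0 ∨ c = r.length ∨ r.length - c ∈ breaks (· > ·) r) := by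
  rw [mem_partialSums_flat]
  constructor
  · rintro ⟨j, hj, rfl⟩
    rw [h.psum_rowWeight hj]
    have hmem := length_sub_countP_lt_mem_breaks h.antitone ((j : ℤ) - m)
    exact ⟨List.countP_le_length, by tauto⟩
  · rintro ⟨hle, rfl | rfl | hc⟩
    · exact ⟨0, Nat.zero_le _, psum_zero _⟩
    · exact ⟨n, le_rfl, by rw [psum_of_le _ le_rfl, h.sum_rowWeight]⟩
    · obtain ⟨k, x, y, hx, hy, hlt, hck⟩ := hc
      obtain ⟨hk, rfl⟩ := List.getElem?_eq_some_iff.mp hx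
      obtain ⟨hk', rfl⟩ := List.getElem?_eq_some_iff.mp hy
      have hlower := h.neg_le _ (List.getElem_mem hk)
      have hupper := h.lt_sub _ (List.getElem_mem hk)
      refine ⟨(r[k] + m).toNat, by omega, ?_⟩
      rw [h.psum_rowWeight (by omega), show (((r[k] + m).toNat : ℕ) : ℤ) - m = r[k] by omega,
        countP_lt_getElem h.antitone hk' hlt]
      omega

theorem refines_iff (hr : IsRowList m n r) (hs : IsRowList m n s) (hlen : r.length = s.length) :
    Refines (flat (rowWeight m n r)) (flat (rowWeight m n s)) ↔
      breaks (· > ·) s ⊆ breaks (· > ·) r := by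
  rw [refines_flat_iff, hr.sum_rowWeight, hs.sum_rowWeight]
  simp only [hlen, true_and]
  constructor
  · intro h c hc
    have hpos := pos_of_mem_breaks hc
    have hlt := lt_length_of_mem_breaks hc
    have hsub : s.length - (s.length - c) = c := by omega
    have hmem := h (hs.mem_partialSums_flat_rowWeight.mpr
      ⟨Nat.sub_le _ c, Or.inr (Or.inr (hsub.symm ▸ hc))⟩)
    rw [hr.mem_partialSums_flat_rowWeight, hlen, hsub] at hmem
    rcases hmem.2 with h | h | h
    · omega
    · omega
    · exact h
  · intro h c hc
    rw [hs.mem_partialSums_flat_rowWeight] at hc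
    rw [hr.mem_partialSums_flat_rowWeight, hlen]
    exact ⟨hc.1, hc.2.imp_right (Or.imp_right fun hc => h hc)⟩

theorem dominates_iff (hr : IsRowList m n r) (hs : IsRowList m n s) (hlen : r.length = s.length) :
    Dominates (rowWeight m n r) (rowWeight m n s) ↔ List.Forall₂ (· ≤ ·) r s := by
  constructor
  · intro h
    refine List.forall₂_iff_get.mpr ⟨hlen, fun k hkr hks => ?_⟩
    rw [List.get_eq_getElem, List.get_eq_getElem]
    have hlower := hs.neg_le _ (List.getElem_mem hks)
    have hupper := hs.lt_sub _ (List.getElem_mem hks)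
    have hdom := h ⟨(s[k] + 1 + m).toNat, by omega⟩
    rw [hr.psum_rowWeight (by omega), hs.psum_rowWeight (by omega),
      show (((s[k] + 1 + m).toNat : ℕ) : ℤ) - m = s[k] + 1 by omega] at hdom
    have hsk := (getElem_lt_iff hs.antitone hks (s[k] + 1)).mp (by omega)
    exact Int.lt_add_one_iff.mp ((getElem_lt_iff hr.antitone hkr (s[k] + 1)).mpr (by omega))
  · intro h i
    rw [hr.psum_rowWeight (by omega), hs.psum_rowWeight (by omega)]
    exact countP_lt_le_countP_lt h _

theorem eq_of_rowWeight_eq (hr : IsRowList m n r) (hs : IsRowList m n s)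
    (h : rowWeight m n r = rowWeight m n s) : r = s := by
  have hperm : r.Perm s := by
    rw [List.perm_iff_count]
    intro x
    by_cases hx : -(m : ℤ) ≤ x ∧ x < (n : ℤ) - m
    · have hcount := congrFun h ⟨(x + m).toNat, by omega⟩
      simp only [rowWeight] at hcount
      rwa [show (((x + m).toNat : ℕ) : ℤ) - m = x by omega] at hcount
    · rw [List.count_eq_zero.mpr fun hmem => hx ⟨hr.neg_le x hmem, hr.lt_sub x hmem⟩,
        List.count_eq_zero.mpr fun hmem => hx ⟨hs.neg_le x hmem, hs.lt_sub x hmem⟩]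
  exact hperm.eq_of_pairwise (fun _ _ _ _ hab hba => le_antisymm hba hab) hr.antitone hs.antitone

end IsRowList

theorem exists_isRowList (m : ℕ) {n : ℕ} (b : Fin n → ℕ) :
    ∃ r, IsRowList m n r ∧ rowWeight m n r = b := by
  set M : Multiset ℤ := ∑ i : Fin n, Multiset.replicate (b i) ((i : ℤ) - m) with hM
  have hmem : ∀ x ∈ M.sort (· ≥ ·), ∃ i : Fin n, x = (i : ℤ) - m := by
    intro x hx
    rw [Multiset.mem_sort, hM, Multiset.mem_sum] at hx
    obtain ⟨i, -, hi⟩ := hx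
    exact ⟨i, Multiset.eq_of_mem_replicate hi⟩
  refine ⟨M.sort (· ≥ ·), ⟨Multiset.pairwise_sort _ _, fun x hx => ?_, fun x hx => ?_⟩, ?_⟩
  · obtain ⟨i, rfl⟩ := hmem x hx
    omega
  · obtain ⟨i, rfl⟩ := hmem x hx
    omega
  · funext i
    rw [rowWeight, ← Multiset.coe_count, Multiset.sort_eq, hM, Multiset.count_sum',
      Finset.sum_eq_single i _ (by simp)]
    · exact Multiset.count_replicate_self _ _
    · intro j _ hj
      rw [Multiset.count_replicate, if_neg fun h => hj (Fin.ext (by omega))]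

/-! ### Compatible sequences -/

/-- A list of rows is compatible with a word if, with `m` added to all rows and letters, the
letters can be realised as the antidiagonals of crosses lying in those rows and met in reading
order. Up to the sign of the rows this is the notion of Billey, Jockusch and Stanley. -/
structure IsCompatible (l : List ℕ) (r : List ℤ) : Prop where
  le_letter : List.Forall₂ (fun x p => x ≤ ((p : ℕ) : ℤ)) r l
  antitone : r.Pairwise (· ≥ ·)
  breaks_subset : breaks (· ≥ ·) l ⊆ breaks (· > ·) r

theorem zero_notMem_breaks {A : Type*} {R : A → A → Prop} {l : List A} : 0 ∉ breaks R l :=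
  fun h => (pos_of_mem_breaks h).false

theorem breaks_cons_cons_subset_iff {A B : Type*} {R : A → A → Prop} {S : B → B → Prop}
    {x y : A} {x' y' : B} {l : List A} {l' : List B} :
    breaks R (x :: y :: l) ⊆ breaks S (x' :: y' :: l') ↔
      (R x y → S x' y') ∧ breaks R (y :: l) ⊆ breaks S (y' :: l') := by
  constructor
  · refine fun h => ⟨fun hxy => ?_, fun c hc => ?_⟩
    · have hmem := h (mem_breaks_cons_cons.mpr (Or.inl ⟨rfl, hxy⟩))
      simpa [mem_breaks_cons_cons, zero_notMem_breaks] using hmem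
    · have hmem := h (mem_breaks_cons_cons.mpr
        (Or.inr ⟨c.succ_pos, (Nat.add_sub_cancel c 1).symm ▸ hc⟩))
      rcases mem_breaks_cons_cons.mp hmem with ⟨h, -⟩ | ⟨-, h⟩
      · exact absurd (Nat.succ_injective h ▸ hc) zero_notMem_breaks
      · exact h
  · rintro ⟨hxy, hsub⟩ c hc
    exact mem_breaks_cons_cons.mpr ((mem_breaks_cons_cons.mp hc).imp
      (And.imp_right hxy) (And.imp_right fun h => hsub h))

theorem isCompatible_nil : IsCompatible [] [] := ⟨.nil, .nil, by simp [breaks_nil]⟩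

theorem isCompatible_singleton {p : ℕ} {x : ℤ} : IsCompatible [p] [x] ↔ x ≤ p :=
  ⟨fun h => (List.forall₂_cons.mp h.le_letter).1, fun h =>
    ⟨.cons h .nil, List.pairwise_singleton _ _, by simp [breaks_singleton]⟩⟩

theorem isCompatible_cons_cons {p q : ℕ} {l : List ℕ} {x y : ℤ} {r : List ℤ} :
    IsCompatible (p :: q :: l) (x :: y :: r) ↔
      x ≤ p ∧ y ≤ x ∧ (q ≤ p → y < x) ∧ IsCompatible (q :: l) (y :: r) := by
  constructor
  · rintro ⟨hle, hanti, hbreaks⟩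
    rw [List.forall₂_cons] at hle
    rw [← List.isChain_iff_pairwise, List.isChain_cons_cons, List.isChain_iff_pairwise] at hanti
    rw [breaks_cons_cons_subset_iff] at hbreaks
    exact ⟨hle.1, hanti.1, hbreaks.1, hle.2, hanti.2, hbreaks.2⟩
  · rintro ⟨hxp, hyx, hlt, h⟩
    refine ⟨.cons hxp h.le_letter, ?_, breaks_cons_cons_subset_iff.mpr ⟨hlt, h.breaks_subset⟩⟩
    rw [← List.isChain_iff_pairwise, List.isChain_cons_cons, List.isChain_iff_pairwise]
    exact ⟨hyx, h.antitone⟩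

/-- The pointwise greatest rows that can follow the row `y` of the letter `p`. -/
def topRowsFrom : ℤ → ℕ → List ℕ → List ℤ
  | _, _, [] => []
  | y, p, q :: l =>
    min (if p < q then y else y - 1) q :: topRowsFrom (min (if p < q then y else y - 1) q) q l

/-- The pointwise greatest list of rows compatible with a word. -/
def topRows : List ℕ → List ℤ
  | [] => []
  | p :: l => p :: topRowsFrom p p l

theorem isCompatible_topRowsFrom {y : ℤ} {p : ℕ} (hy : y ≤ p) (l : List ℕ) :
    IsCompatible (p :: l) (y :: topRowsFrom y p l) := by
  induction l generalizing y p with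
  | nil => exact isCompatible_singleton.mpr hy
  | cons q l ih =>
    exact isCompatible_cons_cons.mpr
      ⟨hy, by split_ifs <;> omega, by split_ifs <;> omega, ih (min_le_right _ _)⟩

theorem breaks_topRowsFrom_subset (y : ℤ) {p : ℕ} (hy : y ≤ p) (l : List ℕ) :
    breaks (· > ·) (y :: topRowsFrom y p l) ⊆ breaks (· ≥ ·) (p :: l) := by
  induction l generalizing y p with
  | nil => simp [topRowsFrom, breaks_singleton]
  | cons q l ih =>
    exact breaks_cons_cons_subset_iff.mpr
      ⟨by split_ifs <;> omega, ih _ (min_le_right _ _)⟩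

theorem IsCompatible.forall₂_le_topRowsFrom {p : ℕ} {l : List ℕ} {x y : ℤ} {r : List ℤ}
    (h : IsCompatible (p :: l) (x :: r)) (hxy : x ≤ y) :
    List.Forall₂ (· ≤ ·) (x :: r) (y :: topRowsFrom y p l) := by
  induction l generalizing p x y r with
  | nil =>
    obtain rfl := List.forall₂_nil_right_iff.mp (List.forall₂_cons.mp h.le_letter).2
    exact .cons hxy .nil
  | cons q l ih =>
    obtain ⟨z, r, -, -, rfl⟩ := List.forall₂_cons_right_iff.mp (List.forall₂_cons.mp h.le_letter).2
    obtain ⟨-, hzx, hlt, htail⟩ := isCompatible_cons_cons.mp h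
    have hzq := (List.forall₂_cons.mp htail.le_letter).1
    exact .cons hxy (ih htail (by split_ifs <;> omega))

theorem neg_le_topRowsFrom_iff {m : ℕ} {y : ℤ} {p : ℕ} {l : List ℕ} :
    (∀ x ∈ y :: topRowsFrom y p l, -(m : ℤ) ≤ x) ↔
      (desFrom p l : ℤ) ≤ y + m ∧ requiredShift l ≤ m := by
  induction l generalizing y p with
  | nil =>
    simp only [topRowsFrom, List.mem_singleton, forall_eq, desFrom, requiredShift]
    omega
  | cons q l ih =>
    rw [topRowsFrom, List.forall_mem_cons, ih, desFrom, requiredShift]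
    split_ifs <;> omega

theorem isCompatible_topRows (l : List ℕ) : IsCompatible l (topRows l) := by
  cases l with
  | nil => exact isCompatible_nil
  | cons p l => exact isCompatible_topRowsFrom le_rfl l

theorem length_topRows (l : List ℕ) : (topRows l).length = l.length :=
  (isCompatible_topRows l).le_letter.length_eq

theorem breaks_topRows (l : List ℕ) : breaks (· > ·) (topRows l) = breaks (· ≥ ·) l := by
  refine Set.Subset.antisymm ?_ (isCompatible_topRows l).breaks_subset
  cases l with
  | nil => simp [topRows, breaks_nil]
  | cons p l => exact breaks_topRowsFrom_subset p le_rfl l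

theorem IsCompatible.forall₂_le_topRows {l : List ℕ} {r : List ℤ} (h : IsCompatible l r) :
    List.Forall₂ (· ≤ ·) r (topRows l) := by
  cases l with
  | nil =>
    obtain rfl := List.forall₂_nil_right_iff.mp h.le_letter
    exact .nil
  | cons p l =>
    obtain ⟨x, r, hxp, -, rfl⟩ := List.forall₂_cons_right_iff.mp h.le_letter
    exact h.forall₂_le_topRowsFrom hxp

theorem neg_le_topRows_iff {m : ℕ} {l : List ℕ} :
    (∀ x ∈ topRows l, -(m : ℤ) ≤ x) ↔ requiredShift l ≤ m := by
  cases l with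
  | nil => simp [topRows, requiredShift]
  | cons p l =>
    rw [topRows, neg_le_topRowsFrom_iff, requiredShift]
    omega

theorem isCompatible_iff {l : List ℕ} {r : List ℤ} (hr : r.Pairwise (· ≥ ·)) :
    IsCompatible l r ↔ List.Forall₂ (· ≤ ·) r (topRows l) ∧
      breaks (· > ·) (topRows l) ⊆ breaks (· > ·) r := by
  rw [breaks_topRows]
  refine ⟨fun h => ⟨h.forall₂_le_topRows, h.breaks_subset⟩, fun ⟨hle, hsub⟩ => ⟨?_, hr, hsub⟩⟩
  have htop := (isCompatible_topRows l).le_letter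
  rw [List.forall₂_iff_get] at hle htop ⊢
  exact ⟨hle.1.trans htop.1, fun k hkr hkl =>
    (hle.2 k hkr (htop.1 ▸ hkl)).trans (htop.2 k (htop.1 ▸ hkl) hkl)⟩

theorem IsCompatible.requiredShift_le {m : ℕ} {l : List ℕ} {r : List ℤ} (h : IsCompatible l r)
    (hr : ∀ x ∈ r, -(m : ℤ) ≤ x) : requiredShift l ≤ m := by
  refine neg_le_topRows_iff.mp fun y hy => ?_
  obtain ⟨k, hk, rfl⟩ := List.getElem_of_mem hy
  have hle := List.forall₂_iff_get.mp h.forall₂_le_topRows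
  exact (hr _ (List.getElem_mem (hle.1 ▸ hk))).trans (hle.2 k (hle.1 ▸ hk) hk)

/-- The weak composition indexing the fundamental slide polynomial that a word contributes to
`𝔖_{1^m × w}`. -/
def wordComp (N m : ℕ) (l : List ℕ) : Fin (m + N) → ℕ := rowWeight m (m + N) (topRows l)

section WordComp

variable {m n N : ℕ} {l : List ℕ}

theorem isRowList_topRows (hl : ∀ p ∈ l, p < N) (hm : requiredShift l ≤ m) :
    IsRowList m (m + N) (topRows l) where
  antitone := (isCompatible_topRows l).antitone
  neg_le := neg_le_topRows_iff.mpr hm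
  lt_sub x hx := by
    obtain ⟨k, hk, rfl⟩ := List.getElem_of_mem hx
    have hle := List.forall₂_iff_get.mp (isCompatible_topRows l).le_letter
    have hxl := hle.2 k hk (hle.1 ▸ hk)
    have hlN := hl _ (List.get_mem l ⟨k, hle.1 ▸ hk⟩)
    change (topRows l)[k] < _
    simp only [List.get_eq_getElem] at hxl hlN
    push_cast
    omega

theorem sum_wordComp (hl : ∀ p ∈ l, p < N) (hm : requiredShift l ≤ m) :
    ∑ i, wordComp N m l i = l.length := by
  rw [wordComp, (isRowList_topRows hl hm).sum_rowWeight, length_topRows]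

theorem isCompatible_iff_rowWeight (hl : ∀ p ∈ l, p < N) (hm : requiredShift l ≤ m) {r : List ℤ}
    (hr : IsRowList m (m + N) r) :
    IsCompatible l r ↔ Dominates (rowWeight m (m + N) r) (wordComp N m l) ∧
      Refines (flat (rowWeight m (m + N) r)) (flat (wordComp N m l)) := by
  have htop := isRowList_topRows hl hm
  rw [isCompatible_iff hr.antitone]
  constructor
  · rintro ⟨hle, hsub⟩
    exact ⟨(hr.dominates_iff htop hle.length_eq).mpr hle,
      (hr.refines_iff htop hle.length_eq).mpr hsub⟩
  · rintro ⟨hdom, href⟩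
    have hlen : r.length = (topRows l).length := by
      rw [← hr.sum_rowWeight, ← htop.sum_rowWeight]
      exact (refines_flat_iff.mp href).1
    exact ⟨(hr.dominates_iff htop hlen).mp hdom, (hr.refines_iff htop hlen).mp href⟩

-- The lowest row is the last one read, so `wordComp` sees the descent composition reversed.
theorem mem_partialSums_flat_wordComp (hl : ∀ p ∈ l, p < N) (hm : requiredShift l ≤ m) {c : ℕ} :
    c ∈ partialSums (flat (wordComp N m l)) ↔
      c ≤ l.length ∧ l.length - c ∈ partialSums (desStrict l) := by
  rw [wordComp, (isRowList_topRows hl hm).mem_partialSums_flat_rowWeight, length_topRows,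
    mem_partialSums_desStrict, breaks_topRows]
  grind

theorem shiftComp_wordComp (hnm : n ≤ m) (hn : requiredShift l ≤ n) :
    shiftComp (m - n) (m + N) (wordComp N n l) = wordComp N m l := by
  funext i
  simp only [shiftComp, wordComp, rowWeight]
  split_ifs with h
  · congr 1
    omega
  · rw [eq_comm, List.count_eq_zero]
    intro hx
    have := neg_le_topRows_iff.mpr hn _ hx
    omega

end WordComp

/-! ### Pipe dreams and their reading words -/

/-- The reading order of crosses: higher rows first, each row from left to right. -/
def ReadLT (c d : ℕ × ℕ) : Prop := d.1 < c.1 ∨ c.1 = d.1 ∧ c.2 < d.2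

instance : IsStrictOrder (ℕ × ℕ) ReadLT where
  irrefl c h := by
    unfold ReadLT at h
    omega
  trans c d e h h' := by
    unfold ReadLT at *
    omega

/-- The crosses of a pipe dream in reading order. -/
def cells (P : Finset (ℕ × ℕ)) : List (ℕ × ℕ) :=
  ((List.range (P.sup Prod.fst + 1)).reverse).flatMap
    (fun i => ((List.range (P.sup Prod.snd + 1)).filter (fun j => decide ((i, j) ∈ P))).map
      (fun j => (i, j)))

theorem mem_cells {P : Finset (ℕ × ℕ)} {c : ℕ × ℕ} : c ∈ cells P ↔ c ∈ P := by
  obtain ⟨i, j⟩ := c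
  simp only [cells, List.mem_flatMap, List.mem_reverse, List.mem_range, List.mem_map,
    List.mem_filter, decide_eq_true_eq, Prod.mk.injEq]
  constructor
  · rintro ⟨i', -, j', ⟨-, h⟩, rfl, rfl⟩
    exact h
  · exact fun h => ⟨i, Nat.lt_succ_of_le (Finset.le_sup (f := Prod.fst) h), j,
      ⟨Nat.lt_succ_of_le (Finset.le_sup (f := Prod.snd) h), h⟩, rfl, rfl⟩

theorem pairwise_cells (P : Finset (ℕ × ℕ)) : (cells P).Pairwise ReadLT := by
  rw [cells, List.pairwise_flatMap, List.pairwise_reverse]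
  constructor
  · intro i _
    rw [List.pairwise_map]
    exact (List.pairwise_lt_range.filter _).imp fun h => Or.inr ⟨rfl, h⟩
  · refine List.pairwise_lt_range.imp fun {i i'} hi => ?_
    simp only [List.mem_map]
    rintro _ ⟨j, -, rfl⟩ _ ⟨j', -, rfl⟩
    exact Or.inl hi

theorem toFinset_cells (P : Finset (ℕ × ℕ)) : (cells P).toFinset = P := by
  ext c
  rw [List.mem_toFinset, mem_cells]

theorem cells_toFinset {Z : List (ℕ × ℕ)} (h : Z.Pairwise ReadLT) : cells Z.toFinset = Z :=
  (pairwise_cells _).eq_of_mem_iff h fun c => by rw [mem_cells, List.mem_toFinset]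

/-- The word recorded by a list of crosses: the antidiagonals on which they lie. -/
def cellWord (Z : List (ℕ × ℕ)) : List ℕ := Z.map fun c => c.1 + c.2

theorem readWord_eq_cellWord (P : Finset (ℕ × ℕ)) : readWord P = cellWord (cells P) := by
  simp only [readWord, cellWord, cells, List.map_flatMap, List.map_map, Function.comp_def]

/-- The rows of a list of crosses, lowered by `m` so that they depend only on `w` when the word
is one of `1^m × w`. -/
def rows (m : ℕ) (Z : List (ℕ × ℕ)) : List ℤ := Z.map fun c => (c.1 : ℤ) - m

section CellWord

variable {m n N : ℕ} {l : List ℕ} {Z : List (ℕ × ℕ)}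

theorem pairwise_readLT_iff_isCompatible (h : cellWord Z = l.map (· + m)) :
    Z.Pairwise ReadLT ↔ IsCompatible l (rows m Z) := by
  induction Z generalizing l with
  | nil =>
    obtain rfl := List.map_eq_nil_iff.mp h.symm
    exact iff_of_true .nil isCompatible_nil
  | cons c Z ih =>
    obtain ⟨p, l, rfl, hp, htail⟩ := List.map_eq_cons_iff.mp h.symm
    dsimp only at hp
    cases Z with
    | nil =>
      obtain rfl := List.map_eq_nil_iff.mp htail
      refine iff_of_true (List.pairwise_singleton _ _) (isCompatible_singleton.mpr ?_)
      dsimp only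
      omega
    | cons d Z =>
      obtain ⟨q, l, rfl, hq, -⟩ := List.map_eq_cons_iff.mp htail
      dsimp only at hq
      rw [← List.isChain_iff_pairwise, List.isChain_cons_cons, List.isChain_iff_pairwise,
        ih htail.symm]
      simp only [rows, List.map_cons, isCompatible_cons_cons]
      rw [← and_assoc, ← and_assoc]
      refine and_congr_left fun _ => ?_
      rw [ReadLT]
      omega

theorem lt_of_cellWord_eq (hl : ∀ p ∈ l, p < N) (h : cellWord Z = l.map (· + m)) :
    ∀ c ∈ Z, c.1 < m + N := by
  intro c hc
  have hmem : c.1 + c.2 ∈ l.map (· + m) := h ▸ List.mem_map_of_mem hc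
  obtain ⟨p, hp, hpc⟩ := List.mem_map.mp hmem
  have hpN := hl p hp
  omega

theorem isRowList_rows (hZ : Z.Pairwise ReadLT) (hn : ∀ c ∈ Z, c.1 < n) :
    IsRowList m n (rows m Z) where
  antitone := by
    rw [rows, List.pairwise_map]
    refine hZ.imp fun {c d} hcd => ?_
    unfold ReadLT at hcd
    omega
  neg_le := by
    simp only [rows, List.mem_map]
    rintro _ ⟨c, -, rfl⟩
    omega
  lt_sub := by
    simp only [rows, List.mem_map]
    rintro _ ⟨c, hc, rfl⟩
    have hcn := hn c hc
    omega

theorem exists_cellWord_eq {r : List ℤ} (hle : List.Forall₂ (fun x p => x ≤ ((p : ℕ) : ℤ)) r l)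
    (hr : ∀ x ∈ r, -(m : ℤ) ≤ x) : ∃ Z, cellWord Z = l.map (· + m) ∧ rows m Z = r := by
  induction hle with
  | nil => exact ⟨[], rfl, rfl⟩
  | @cons x p r l hxp _ ih =>
    rw [List.forall_mem_cons] at hr
    obtain ⟨Z, hword, hrows⟩ := ih hr.2
    refine ⟨((x + m).toNat, (p - x).toNat) :: Z, List.cons_eq_cons.mpr ⟨?_, hword⟩,
      List.cons_eq_cons.mpr ⟨?_, hrows⟩⟩ <;>
      dsimp only <;> omega

theorem eq_of_rows_eq_of_cellWord_eq {Z' : List (ℕ × ℕ)} (hrows : rows m Z = rows m Z')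
    (hword : cellWord Z = cellWord Z') : Z = Z' := by
  have hinj : Function.Injective fun c : ℕ × ℕ => ((c.1 : ℤ) - m, c.1 + c.2) := by
    rintro ⟨i, j⟩ ⟨i', j'⟩ h
    simp only [Prod.mk.injEq] at h ⊢
    omega
  refine hinj.list_map ?_
  have hzip := congrArg₂ List.zip hrows hword
  rwa [rows, rows, cellWord, cellWord, List.zip_map', List.zip_map'] at hzip

end CellWord

theorem wtFin_eq_rowWeight (m n : ℕ) (P : Finset (ℕ × ℕ)) :
    wtFin n P = rowWeight m n (rows m (cells P)) := by
  funext i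
  have hfilter : P.filter (fun c => c.1 = (i : ℕ)) =
      ((cells P).filter fun c => decide (c.1 = (i : ℕ))).toFinset := by
    ext c
    simp [mem_cells]
  rw [wtFin, rowWt, rowWeight, rows, List.count, List.countP_map, hfilter,
    List.toFinset_card_of_nodup ((pairwise_cells P).nodup.filter _),
    ← List.countP_eq_length_filter]
  exact List.countP_congr fun c _ => by simp

/-! ### Expansion into fundamental slide polynomials -/

/-- The exponents of the monomials of the fundamental slide polynomial `𝔉_a`. -/
noncomputable def slideSupport {n : ℕ} (a : Fin n → ℕ) : Finset (Fin n → ℕ) :=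
  (wcFinset n (∑ i, a i)).filter fun b => Dominates b a ∧ Refines (flat b) (flat a)

theorem mem_slideSupport {n : ℕ} {a b : Fin n → ℕ} :
    b ∈ slideSupport a ↔ Dominates b a ∧ Refines (flat b) (flat a) := by
  rw [slideSupport, Finset.mem_filter, and_iff_right_iff_imp]
  rintro ⟨-, href⟩
  rw [wcFinset, Fintype.mem_piFinset]
  intro i
  rw [Finset.mem_range, ← (refines_flat_iff.mp href).1]
  exact Nat.lt_succ_of_le (Finset.single_le_sum (fun _ _ => Nat.zero_le _) (Finset.mem_univ i))

theorem slideF_eq_sum_slideSupport {n : ℕ} (a : Fin n → ℕ) :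
    slideF a = ∑ b ∈ slideSupport a, MvPolynomial.monomial (Finsupp.equivFunOnFinite.symm b) 1 :=
  rfl

section PipeDreams

variable {m N : ℕ} {l : List ℕ} {P : Finset (ℕ × ℕ)}

theorem isCompatible_rows_cells (h : readWord P = l.map (· + m)) :
    IsCompatible l (rows m (cells P)) :=
  (pairwise_readLT_iff_isCompatible (readWord_eq_cellWord P ▸ h)).mp (pairwise_cells P)

theorem isRowList_rows_cells (hl : ∀ p ∈ l, p < N) (h : readWord P = l.map (· + m)) :
    IsRowList m (m + N) (rows m (cells P)) :=
  isRowList_rows (pairwise_cells P) (lt_of_cellWord_eq hl (readWord_eq_cellWord P ▸ h))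

theorem requiredShift_le_of_readWord_eq (h : readWord P = l.map (· + m)) :
    requiredShift l ≤ m := by
  refine (isCompatible_rows_cells h).requiredShift_le ?_
  simp only [rows, List.mem_map]
  rintro _ ⟨c, -, rfl⟩
  omega

theorem exists_readWord_eq_of_isCompatible {r : List ℤ} (h : IsCompatible l r)
    (hr : ∀ x ∈ r, -(m : ℤ) ≤ x) :
    ∃ P, readWord P = l.map (· + m) ∧ rows m (cells P) = r := by
  obtain ⟨Z, hword, rfl⟩ := exists_cellWord_eq h.le_letter hr
  have hZ := cells_toFinset ((pairwise_readLT_iff_isCompatible hword).mpr h)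
  exact ⟨Z.toFinset, by rw [readWord_eq_cellWord, hZ, hword], by rw [hZ]⟩

theorem bijOn_wtFin_slideSupport (hl : ∀ p ∈ l, p < N) (hm : requiredShift l ≤ m) :
    Set.BijOn (wtFin (m + N)) {P | readWord P = l.map (· + m)}
      (slideSupport (wordComp N m l)) := by
  refine ⟨fun P hP => ?_, fun P hP P' hP' h => ?_, fun b hb => ?_⟩
  · rw [Finset.mem_coe, mem_slideSupport, wtFin_eq_rowWeight m,
      ← isCompatible_iff_rowWeight hl hm (isRowList_rows_cells hl hP)]
    exact isCompatible_rows_cells hP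
  · rw [wtFin_eq_rowWeight m, wtFin_eq_rowWeight m] at h
    have hrows := (isRowList_rows_cells hl hP).eq_of_rowWeight_eq (isRowList_rows_cells hl hP') h
    rw [← toFinset_cells P, ← toFinset_cells P', eq_of_rows_eq_of_cellWord_eq hrows]
    rw [← readWord_eq_cellWord, ← readWord_eq_cellWord, hP, hP']
  · obtain ⟨r, hr, rfl⟩ := exists_isRowList m b
    have hcompat := (isCompatible_iff_rowWeight hl hm hr).mpr (mem_slideSupport.mp hb)
    obtain ⟨P, hP, hrows⟩ := exists_readWord_eq_of_isCompatible hcompat hr.neg_le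
    exact ⟨P, hP, by rw [wtFin_eq_rowWeight m, hrows]⟩

theorem finite_setOf_readWord_eq (hl : ∀ p ∈ l, p < N) :
    {P | readWord P = l.map (· + m)}.Finite := by
  by_cases hm : requiredShift l ≤ m
  · exact (bijOn_wtFin_slideSupport hl hm).finite_iff_finite.mpr (Finset.finite_toSet _)
  · exact Set.finite_empty.subset fun P hP => hm (requiredShift_le_of_readWord_eq hP)

theorem finsum_readWord_eq (hl : ∀ p ∈ l, p < N) :
    ∑ᶠ P ∈ {P | readWord P = l.map (· + m)},
        MvPolynomial.monomial (Finsupp.equivFunOnFinite.symm (wtFin (m + N) P)) (1 : ℤ) =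
      if requiredShift l ≤ m then slideF (wordComp N m l) else 0 := by
  split_ifs with hm
  · rw [slideF_eq_sum_slideSupport, ← finsum_mem_coe_finset]
    exact finsum_mem_eq_of_bijOn _ (bijOn_wtFin_slideSupport hl hm) fun _ _ => rfl
  · exact finsum_mem_eq_zero_of_forall_eq_zero fun P hP =>
      absurd (requiredShift_le_of_readWord_eq hP) hm

end PipeDreams

section Schubert

variable {w : Equiv.Perm ℕ} {N : ℕ}

theorem setOf_isPD_shiftPerm (m : ℕ) (w : Equiv.Perm ℕ) : {P | IsPD (shiftPerm m w) P} =
      ⋃ l ∈ (redWords w : Set (List ℕ)), {P | readWord P = l.map (· + m)} := by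
  ext P
  simp only [Set.mem_ofPred_eq, Set.mem_iUnion, exists_prop, Finset.mem_coe, mem_redWords,
    IsPD, ← sorts_iff]
  constructor
  · intro h
    obtain ⟨l, hl⟩ := h.exists_eq_map_add
    exact ⟨l, sorts_map_add_iff.mp (hl ▸ h), hl⟩
  · rintro ⟨l, hl, hP⟩
    exact hP ▸ sorts_map_add_iff.mpr hl

theorem schubertPoly_shiftPerm (hN : FixesFrom w N) (m : ℕ) :
    SchubertPoly (m + N) (shiftPerm m w) =
      ∑ l ∈ redWords w with requiredShift l ≤ m, slideF (wordComp N m l) := by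
  have hlt : ∀ l ∈ redWords w, ∀ p ∈ l, p < N := fun l hl =>
    hN.lt_of_mem_sorts (mem_redWords.mp hl)
  rw [SchubertPoly, setOf_isPD_shiftPerm, finsum_mem_biUnion ?_ (redWords w).finite_toSet
    fun l hl => finite_setOf_readWord_eq (hlt l hl), finsum_mem_coe_finset, Finset.sum_filter]
  · exact Finset.sum_congr rfl fun l hl => finsum_readWord_eq (hlt l hl)
  · refine fun l _ l' _ hne => Set.disjoint_left.mpr fun P hP hP' => hne ?_
    exact (add_left_injective m).list_map (hP.symm.trans hP')

end Schubert

/-! ### Uniqueness of the expansion -/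

section SlideF

variable {n : ℕ}

theorem coeff_slideF (a b : Fin n → ℕ) :
    MvPolynomial.coeff (Finsupp.equivFunOnFinite.symm b) (slideF a) =
      if b ∈ slideSupport a then 1 else 0 := by
  simp only [slideF_eq_sum_slideSupport, MvPolynomial.coeff_sum, MvPolynomial.coeff_monomial,
    EmbeddingLike.apply_eq_iff_eq]
  exact Finset.sum_ite_eq' _ b fun _ => (1 : ℤ)

theorem coeff_slideF_self (a : Fin n → ℕ) :
    MvPolynomial.coeff (Finsupp.equivFunOnFinite.symm a) (slideF a) = 1 := by
  rw [coeff_slideF, if_pos]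
  exact mem_slideSupport.mpr ⟨fun _ => le_rfl, refines_flat_iff.mpr ⟨rfl, subset_rfl⟩⟩

theorem coeff_slideF_nonneg (a b : Fin n → ℕ) :
    0 ≤ MvPolynomial.coeff (Finsupp.equivFunOnFinite.symm b) (slideF a) := by
  rw [coeff_slideF]
  split_ifs <;> norm_num

theorem Dominates.eq_of_sum_psum_le {a b : Fin n → ℕ} (h : Dominates a b)
    (hle : ∑ i : Fin (n + 1), psum a i ≤ ∑ i : Fin (n + 1), psum b i) : a = b := by
  refine psum_injective fun i => ?_
  have hsum := le_antisymm (Finset.sum_le_sum fun i _ => h i) hle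
  exact ((Finset.sum_eq_sum_iff_of_le fun i _ => h i).mp hsum i (Finset.mem_univ i)).symm

-- Among the slide polynomials that occur, one with index minimal for dominance is the only one
-- to contain its leading monomial.
theorem linearIndependent_slideF : LinearIndependent ℤ (slideF (n := n)) := by
  rw [linearIndependent_iff']
  intro s c hsum
  by_contra! h
  obtain ⟨a, ha, hmin⟩ := (s.filter fun a => c a ≠ 0).exists_min_image
    (fun a => ∑ i : Fin (n + 1), psum a i) (by simpa [Finset.Nonempty] using h)
  rw [Finset.mem_filter] at ha
  have hcoeff := congrArg (MvPolynomial.coeff (Finsupp.equivFunOnFinite.symm a)) hsum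
  rw [MvPolynomial.coeff_sum, Finset.sum_eq_single_of_mem a ha.1, MvPolynomial.coeff_smul,
    coeff_slideF_self, MvPolynomial.coeff_zero, smul_eq_mul, mul_one] at hcoeff
  · exact ha.2 hcoeff
  · intro b hb hba
    rw [MvPolynomial.coeff_smul, coeff_slideF, smul_ite, smul_zero, ite_eq_right_iff]
    intro hmem
    by_contra hcb
    rw [smul_eq_mul, mul_one] at hcb
    exact hba ((mem_slideSupport.mp hmem).1.eq_of_sum_psum_le
      (hmin b (Finset.mem_filter.mpr ⟨hb, hcb⟩))).symm

end SlideF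

/-! ### Stability -/

theorem finsum_smul_eq_linearCombination {R ι M : Type*} [Semiring R] [AddCommMonoid M] [Module R M]
    (v : ι → M) (c : ι →₀ R) : ∑ᶠ a, c a • v a = Finsupp.linearCombination R v c := by
  rw [Finsupp.linearCombination_apply, Finsupp.sum]
  exact finsum_eq_sum_of_support_subset _ fun a ha => Finsupp.mem_support_iff.mpr
    fun h => ha (by simp only [h, zero_smul])

theorem finsum_smul_eq_sum_of_linearIndependent {R ι κ M M' : Type*} [Semiring R]
    [AddCommMonoid M] [Module R M] [AddCommMonoid M'] [Module R M'] {v : ι → M}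
    (hv : LinearIndependent R v) {c : ι → R} (hc : {a | c a ≠ 0}.Finite) {s : Finset κ} {A : κ → ι}
    (h : ∑ᶠ a, c a • v a = ∑ k ∈ s, v (A k)) (F : ι → M') :
    ∑ᶠ a, c a • F a = ∑ k ∈ s, F (A k) := by
  lift c to ι →₀ R using hc
  have hsum : c = ∑ k ∈ s, Finsupp.single (A k) 1 := hv (by
    rw [← finsum_smul_eq_linearCombination, h, map_sum]
    simp only [Finsupp.linearCombination_single, one_smul])
  rw [finsum_smul_eq_linearCombination, hsum, map_sum]
  simp only [Finsupp.linearCombination_single, one_smul]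

section Stability

variable {w : Equiv.Perm ℕ} {m n N : ℕ} {c : (Fin (n + N) → ℕ) → ℤ}

theorem finsum_smul_eq_sum_redWords (hN : FixesFrom w N) (hc : {a | c a ≠ 0}.Finite)
    (h : SchubertPoly (n + N) (shiftPerm n w) = ∑ᶠ a, c a • slideF a)
    {M : Type*} [AddCommGroup M] (F : (Fin (n + N) → ℕ) → M) :
    ∑ᶠ a, c a • F a = ∑ l ∈ redWords w with requiredShift l ≤ n, F (wordComp N n l) :=
  finsum_smul_eq_sum_of_linearIndependent linearIndependent_slideF hc
    (h.symm.trans (schubertPoly_shiftPerm hN n)) F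

theorem finsum_smul_slideF_shiftComp (hN : FixesFrom w N) (hc : {a | c a ≠ 0}.Finite)
    (h : SchubertPoly (n + N) (shiftPerm n w) = ∑ᶠ a, c a • slideF a) (hnm : n ≤ m) :
    ∑ᶠ a, c a • slideF (shiftComp (m - n) (m + N) a) =
      ∑ l ∈ redWords w with requiredShift l ≤ n, slideF (wordComp N m l) := by
  rw [finsum_smul_eq_sum_redWords hN hc h fun a => slideF (shiftComp (m - n) (m + N) a)]
  exact Finset.sum_congr rfl fun l hl => by
    rw [shiftComp_wordComp hnm (Finset.mem_filter.mp hl).2]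

theorem filter_requiredShift_le_eq_redWords (hn : eta w ≤ n) :
    (redWords w).filter (requiredShift · ≤ n) = redWords w :=
  Finset.filter_true_of_mem fun _ hl => requiredShift_le_of_eta_le (mem_redWords.mp hl) hn

theorem stanleySym_eq_sum_wordComp (hN : FixesFrom w N) (hn : eta w ≤ n) :
    StanleySym w = ∑ l ∈ redWords w, FqsFun (flat (wordComp N n l)) := by
  have hlt : ∀ l ∈ redWords w, ∀ p ∈ l, p < N := fun l hl =>
    hN.lt_of_mem_sorts (mem_redWords.mp hl)
  have hle : ∀ l ∈ redWords w, requiredShift l ≤ n := fun l hl =>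
    requiredShift_le_of_eta_le (mem_redWords.mp hl) hn
  exact stanleySym_eq_of_partialSums ⟨N, hN⟩
    (fun l hl => (sum_flat _).trans (sum_wordComp (hlt l hl) (hle l hl)))
    fun l hl c => mem_partialSums_flat_wordComp (hlt l hl) (hle l hl)

-- A word with `requiredShift l = n + 1` contributes its leading monomial to `𝔖_{1^m × w}` but not
-- to the shift of `𝔖_{1^n × w}`, and no cancellation is possible.
theorem eta_le_of_sum_slideF_eq (hN : FixesFrom w N) (hw : w ≠ 1) (hnm : n < m)
    (h : ∑ l ∈ redWords w with requiredShift l ≤ n, slideF (wordComp N m l) =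
      ∑ l ∈ redWords w with requiredShift l ≤ m, slideF (wordComp N m l)) : eta w ≤ n := by
  by_contra! hlt
  obtain ⟨l, hl, hshift⟩ := IsFinitary.exists_sorts_requiredShift_eq ⟨N, hN⟩ hw
    (v := n + 1) (by exact_mod_cast hlt)
  have hcoeff := congrArg
    (MvPolynomial.coeff (Finsupp.equivFunOnFinite.symm (wordComp N m l))) h
  rw [MvPolynomial.coeff_sum, MvPolynomial.coeff_sum] at hcoeff
  refine hcoeff.not_lt (Finset.sum_lt_sum_of_subset (i := l)
    (Finset.monotone_filter_right _ fun _ _ hx => hx.trans hnm.le) ?_ ?_ ?_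
    fun _ _ _ => coeff_slideF_nonneg _ _)
  · exact Finset.mem_filter.mpr ⟨mem_redWords.mpr hl, hshift ▸ hnm⟩
  · exact fun hmem => absurd (Finset.mem_filter.mp hmem).2 (by omega)
  · exact (coeff_slideF_self _).symm ▸ zero_lt_one

end Stability

/-- stability of the fundamental slide expansion of Schubert polynomials:
with `η = max(η(w), 0)`, the coefficients of the expansion of `𝔖_{1^η × w}` give the
expansion of `𝔖_{1^m × w}` for all `m ≥ η` (with indices shifted), and the Stanley
symmetric function is `S_w = Σ_a c_a F_{flat(a)}`; moreover this is tight. -/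
theorem schubert_stability (w : Equiv.Perm ℕ) (hw : w ≠ 1) (N : ℕ)
    (hN : ∀ i, N ≤ i → w i = i) (ηn : ℕ) (hη : (ηn : ℤ) = max (eta w) 0) :
    (∀ c : (Fin (ηn + N) → ℕ) → ℤ, {a | c a ≠ 0}.Finite →
      SchubertPoly (ηn + N) (shiftPerm ηn w) = ∑ᶠ a : Fin (ηn + N) → ℕ, c a • slideF a →
      ((∀ m : ℕ, ηn ≤ m →
        SchubertPoly (m + N) (shiftPerm m w)
          = ∑ᶠ a : Fin (ηn + N) → ℕ, c a • slideF (shiftComp (m - ηn) (m + N) a)) ∧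
       StanleySym w = ∑ᶠ a : Fin (ηn + N) → ℕ, c a • FqsFun (flat a))) ∧
    (∀ n' m : ℕ, n' < m → ∀ c' : (Fin (n' + N) → ℕ) → ℤ, {a | c' a ≠ 0}.Finite →
      SchubertPoly (n' + N) (shiftPerm n' w) = ∑ᶠ a : Fin (n' + N) → ℕ, c' a • slideF a →
      SchubertPoly (m + N) (shiftPerm m w)
        = ∑ᶠ a : Fin (n' + N) → ℕ, c' a • slideF (shiftComp (m - n') (m + N) a) →
      eta w ≤ (n' : ℤ)) := by
  have hηw : eta w ≤ ηn := hη ▸ le_max_left _ _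
  refine ⟨fun c hc h => ⟨fun m hm => ?_, ?_⟩, fun n m hnm c hc h hm => ?_⟩
  · have hmw : eta w ≤ m := hηw.trans (by exact_mod_cast hm)
    rw [finsum_smul_slideF_shiftComp hN hc h hm, schubertPoly_shiftPerm hN,
      filter_requiredShift_le_eq_redWords hmw, filter_requiredShift_le_eq_redWords hηw]
  · rw [finsum_smul_eq_sum_redWords hN hc h fun a => FqsFun (flat a),
      filter_requiredShift_le_eq_redWords hηw, stanleySym_eq_sum_wordComp hN hηw]
  · rw [finsum_smul_slideF_shiftComp hN hc h hnm.le, schubertPoly_shiftPerm hN] at hm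
    exact eta_le_of_sum_slideF_eq hN hw hnm hm.symm

end SlidePaper
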